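/- arXiv:2305.07567 — 8 statements merged into one kernel-verified Lean document; each statement's English description precedes it below -/
import Mathlib

section
/- Let W = (L, f) be a weighted lattice with L modular and complemented, and let H be a coatom of L. Then, as polynomials in ℤ[z], P(W; z) = P(W|_H; z)·(P(W/H; z) + 1) − ∑_{b atom of L, b ≰ H} P(W/b; z). -/
/-- The characteristic polynomial of the minor `W([X,Y])` of the weighted lattice `W = (L, f)`:
`P(W([X,Y]); z) = ∑_{A ∈ L, X ≤ A ≤ Y} μ(X,A) · z^(f(Y) - f(A))`. -/
noncomputable def charPoly {L : Type*} [Lattice L] (μ : L → L → ℤ) (f : L → ℕ) (X Y : L) :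
    Polynomial ℤ :=
  ∑ᶠ A ∈ Set.Icc X Y, μ X A • ((Polynomial.X : Polynomial ℤ) ^ (f Y - f A))

/-!
Split the sum defining `P(W; z)` according to whether `A ≤ H`. Since `P(W/H; z) + 1` is the monomial
`z ^ (f ⊤ - f H)`, the terms with `A ≤ H` add up to `P(W|_H; z) * (P(W/H; z) + 1)`. If `A ≰ H`, then
the dual form of Weisner's theorem says that `μ(x, A)` sums to zero over the `x ≤ A` with
`x ⊓ H = ⊥`; by lower semimodularity these `x` are `⊥` and the atoms not below `H`, so
`μ(⊥, A) = -∑ μ(b, A)` over the atoms `b ≤ A` with `b ≰ H`, and exchanging the two sums turns the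
remaining terms into `-∑ P(W/b; z)`.
-/

open Finset IncidenceAlgebra

section MoebiusFunction

variable {α : Type*} [DecidableEq α]

theorem eq_mu_of_eq_neg_finsum_Ico [PartialOrder α] [LocallyFiniteOrder α]
    {R : Type*} [AddCommGroup R] [One R] {μ : α → α → R} (hμ_refl : ∀ x, μ x x = 1)
    (hμ_rec : ∀ x y, x < y → μ x y = -∑ᶠ z ∈ Set.Ico x y, μ x z) {x y : α} (hxy : x ≤ y) :
    μ x y = mu R x y := by
  obtain rfl | hlt := hxy.eq_or_lt
  · rw [hμ_refl, mu_self]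
  · rw [hμ_rec x y hlt, mu_eq_neg_sum_Ico_of_ne hlt.ne, ← coe_Ico, finsum_mem_coe_finset]
    refine congrArg Neg.neg (sum_congr rfl fun z hz ↦ ?_)
    have hxz : x ≤ z := (mem_Ico.1 hz).1
    have : #(Icc x z) < #(Icc x y) :=
      card_lt_card (Icc_ssubset_Icc_right hxy le_rfl (mem_Ico.1 hz).2)
    exact eq_mu_of_eq_neg_finsum_Ico hμ_refl hμ_rec hxz
termination_by #(Icc x y)

theorem mu_eq_neg_one_of_covBy [PartialOrder α] [LocallyFiniteOrder α]
    {R : Type*} [AddCommGroup R] [One R] {x y : α} (hxy : x ⋖ y) : mu R x y = -1 := by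
  have hIco : Ico x y = {x} := by rw [← coe_inj, coe_Ico, hxy.Ico_eq, coe_singleton]
  rw [mu_eq_neg_sum_Ico_of_ne hxy.ne, hIco, sum_singleton, mu_self]

theorem sum_mu_filter_inf_eq_zero [SemilatticeInf α] [LocallyFiniteOrder α] {R : Type*} [Ring R]
    {X H A : α} (hAH : ¬A ≤ H) :
    ∑ x ∈ Icc X A with x ⊓ H = X, mu R x A = 0 :=
  -- The indicator of `x ⊓ H = X` is written as the sum of `μ(X, y)` over `X ≤ y ≤ x ⊓ H`.
  calc
    ∑ x ∈ Icc X A with x ⊓ H = X, mu R x A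
    _ = ∑ x ∈ Icc X A, ∑ y ∈ Icc X (x ⊓ H), mu R X y * mu R x A := by
      simp only [sum_filter, ← sum_mul, sum_Icc_mu_right, ite_mul, one_mul, zero_mul,
        eq_comm (a := X)]
    _ = ∑ y ∈ Icc X (A ⊓ H), ∑ x ∈ Icc y A, mu R X y * mu R x A := by
      refine sum_comm' fun x y ↦ ?_
      simp only [mem_Icc, le_inf_iff]
      grind
    _ = 0 := by
      refine sum_eq_zero fun y hy ↦ ?_
      have hyA : y ≠ A := by
        rintro rfl
        exact hAH ((mem_Icc.1 hy).2.trans inf_le_right)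
      rw [← mul_sum, sum_Icc_mu_left, if_neg hyA, mul_zero]

end MoebiusFunction

section AtomsNotBelow

variable {L : Type*} [Lattice L] {X H A Y b : L}

theorem inf_eq_iff_eq_or_covBy [IsLowerModularLattice L] (hXH : X ≤ H) (hHY : H ⋖ Y) {x : L}
    (hxY : x ≤ Y) : x ⊓ H = X ↔ x = X ∨ X ⋖ x ∧ ¬x ≤ H := by
  constructor
  · rintro rfl
    by_cases hxH : x ≤ H
    · exact .inl (inf_eq_left.2 hxH).symm
    · have hsup : x ⊔ H = Y :=
        (hHY.eq_or_eq le_sup_right (sup_le hxY hHY.le)).resolve_left fun h ↦ hxH (sup_eq_right.1 h)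
      exact .inr ⟨inf_covBy_of_covBy_sup_right (hsup ▸ hHY), hxH⟩
  · rintro (rfl | ⟨hXx, hxH⟩)
    · exact inf_eq_left.2 hXH
    · exact (hXx.eq_or_eq (le_inf hXx.le hXH) inf_le_left).resolve_right
        fun h ↦ hxH (inf_eq_left.1 h)

variable [LocallyFiniteOrder L]

open scoped Classical in
/-- The atoms of the interval `[X, A]` that are not below `H`. Atoms of an interval are encoded as
the elements covering its least element, so that `L` need not be bounded. -/
noncomputable def atomsNotBelow (H X A : L) : Finset L :=
  {b ∈ Icc X A | X ⋖ b ∧ ¬b ≤ H}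

theorem mem_atomsNotBelow : b ∈ atomsNotBelow H X A ↔ X ⋖ b ∧ b ≤ A ∧ ¬b ≤ H := by
  simp only [atomsNotBelow, mem_filter, mem_Icc]
  exact ⟨fun h ↦ ⟨h.2.1, h.1.2, h.2.2⟩, fun h ↦ ⟨⟨h.1.le, h.2.1⟩, h.1, h.2.2⟩⟩

theorem mu_eq_neg_sum_atomsNotBelow [IsLowerModularLattice L] [DecidableEq L] {R : Type*} [Ring R]
    (hXH : X ≤ H) (hHY : H ⋖ Y) (hXA : X ≤ A) (hAY : A ≤ Y) (hAH : ¬A ≤ H) :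
    mu R X A = -∑ b ∈ atomsNotBelow H X A, mu R b A := by
  have hX : X ∉ atomsNotBelow H X A := fun h ↦ (mem_atomsNotBelow.1 h).1.ne rfl
  have hfilter : {x ∈ Icc X A | x ⊓ H = X} = insert X (atomsNotBelow H X A) := by
    ext x
    rw [mem_filter, mem_Icc, mem_insert, mem_atomsNotBelow]
    constructor
    · rintro ⟨⟨-, hxA⟩, hx⟩
      exact ((inf_eq_iff_eq_or_covBy hXH hHY (hxA.trans hAY)).1 hx).imp_right
        fun h ↦ ⟨h.1, hxA, h.2⟩
    · rintro (rfl | ⟨hXx, hxA, hxH⟩)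
      · exact ⟨⟨le_rfl, hXA⟩, inf_eq_left.2 hXH⟩
      · exact ⟨⟨hXx.le, hxA⟩,
          (inf_eq_iff_eq_or_covBy hXH hHY (hxA.trans hAY)).2 (.inr ⟨hXx, hxH⟩)⟩
  rw [eq_neg_iff_add_eq_zero, ← sum_insert (f := fun x ↦ mu R x A) hX, ← hfilter]
  exact sum_mu_filter_inf_eq_zero hAH

end AtomsNotBelow

section CharPoly

variable {L : Type*} [Lattice L] {X H Y : L}

theorem charPoly_congr {μ ν : L → L → ℤ} (h : ∀ x y, x ≤ y → μ x y = ν x y) (f : L → ℕ)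
    (X Y : L) : charPoly μ f X Y = charPoly ν f X Y := by
  unfold charPoly
  exact finsum_mem_congr rfl fun A hA ↦ by rw [h X A hA.1]

variable [LocallyFiniteOrder L]

theorem charPoly_eq_sum (μ : L → L → ℤ) (f : L → ℕ) (X Y : L) :
    charPoly μ f X Y = ∑ A ∈ Icc X Y, μ X A • (Polynomial.X : Polynomial ℤ) ^ (f Y - f A) := by
  rw [charPoly, ← coe_Icc, finsum_mem_coe_finset]

open scoped Classical in
theorem charPoly_eq_charPoly_mul_X_pow_add_sum {f : L → ℕ} (hf : Monotone f) (hHY : H ≤ Y)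
    (μ : L → L → ℤ) (X : L) :
    charPoly μ f X Y = charPoly μ f X H * Polynomial.X ^ (f Y - f H) +
      ∑ A ∈ Icc X Y with ¬A ≤ H, μ X A • (Polynomial.X : Polynomial ℤ) ^ (f Y - f A) := by
  have hIcc : {A ∈ Icc X Y | A ≤ H} = Icc X H := by
    ext A
    rw [mem_filter, mem_Icc, mem_Icc]
    exact ⟨fun h ↦ ⟨h.1.1, h.2⟩, fun h ↦ ⟨⟨h.1, h.2.trans hHY⟩, h.2⟩⟩
  rw [charPoly_eq_sum, charPoly_eq_sum, sum_mul,
    ← sum_filter_add_sum_filter_not (Icc X Y) (· ≤ H), hIcc]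
  refine congrArg (· + _) (sum_congr rfl fun A hA ↦ ?_)
  rw [smul_mul_assoc, ← pow_add, add_comm,
    Nat.sub_add_sub_cancel (hf hHY) (hf (mem_Icc.1 hA).2)]

variable [DecidableEq L]

theorem charPoly_mu_add_one_of_covBy (f : L → ℕ) (hHY : H ⋖ Y) :
    charPoly (mu ℤ) f H Y + 1 = Polynomial.X ^ (f Y - f H) := by
  have hIcc : Icc H Y = {H, Y} := by rw [← coe_inj, coe_Icc, hHY.Icc_eq, coe_pair]
  rw [charPoly_eq_sum, hIcc, sum_pair hHY.ne, mu_self, mu_eq_neg_one_of_covBy hHY]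
  simp

open scoped Classical in
theorem sum_atomsNotBelow_charPoly_mu [IsLowerModularLattice L] (f : L → ℕ) (hXH : X ≤ H)
    (hHY : H ⋖ Y) :
    ∑ b ∈ atomsNotBelow H X Y, charPoly (mu ℤ) f b Y =
      -∑ A ∈ Icc X Y with ¬A ≤ H, mu ℤ X A • (Polynomial.X : Polynomial ℤ) ^ (f Y - f A) :=
  calc
    ∑ b ∈ atomsNotBelow H X Y, charPoly (mu ℤ) f b Y
    _ = ∑ b ∈ atomsNotBelow H X Y, ∑ A ∈ Icc b Y,
          mu ℤ b A • (Polynomial.X : Polynomial ℤ) ^ (f Y - f A) := by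
      simp only [charPoly_eq_sum]
    _ = ∑ A ∈ Icc X Y with ¬A ≤ H, ∑ b ∈ atomsNotBelow H X A,
          mu ℤ b A • (Polynomial.X : Polynomial ℤ) ^ (f Y - f A) := by
      refine sum_comm' fun b A ↦ ?_
      simp only [mem_atomsNotBelow, mem_filter, mem_Icc]
      constructor
      · rintro ⟨⟨hXb, -, hbH⟩, hbA, hAY⟩
        exact ⟨⟨hXb, hbA, hbH⟩, ⟨hXb.le.trans hbA, hAY⟩, fun hAH ↦ hbH (hbA.trans hAH)⟩
      · rintro ⟨⟨hXb, hbA, hbH⟩, ⟨-, hAY⟩, -⟩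
        exact ⟨⟨hXb, hbA.trans hAY, hbH⟩, hbA, hAY⟩
    _ = -∑ A ∈ Icc X Y with ¬A ≤ H,
          mu ℤ X A • (Polynomial.X : Polynomial ℤ) ^ (f Y - f A) := by
      rw [← sum_neg_distrib]
      refine sum_congr rfl fun A hA ↦ ?_
      obtain ⟨hXAY, hAH⟩ := mem_filter.1 hA
      obtain ⟨hXA, hAY⟩ := mem_Icc.1 hXAY
      rw [mu_eq_neg_sum_atomsNotBelow hXH hHY hXA hAY hAH, neg_smul, neg_neg, sum_smul]

end CharPoly

theorem charPoly_coatom_decomposition_general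
    {L : Type*} [Lattice L] [LocallyFiniteOrder L] [IsLowerModularLattice L]
    {f : L → ℕ} (hf : Monotone f)
    {μ : L → L → ℤ} (hμ_refl : ∀ x : L, μ x x = 1)
    (hμ_rec : ∀ x y : L, x < y → μ x y = -∑ᶠ z ∈ Set.Ico x y, μ x z)
    {X H Y : L} (hXH : X ≤ H) (hHY : H ⋖ Y) :
    charPoly μ f X Y =
      charPoly μ f X H * (charPoly μ f H Y + 1)
        - ∑ᶠ b ∈ {b : L | X ⋖ b ∧ b ≤ Y ∧ ¬b ≤ H}, charPoly μ f b Y := by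
  classical
  have hatoms : {b : L | X ⋖ b ∧ b ≤ Y ∧ ¬b ≤ H} = atomsNotBelow H X Y := by
    ext b
    exact mem_atomsNotBelow.symm
  have hμ : charPoly μ f = charPoly (mu ℤ) f := by
    funext x y
    exact charPoly_congr (fun _ _ ↦ eq_mu_of_eq_neg_finsum_Ico hμ_refl hμ_rec) f x y
  rw [hatoms, finsum_mem_coe_finset, hμ, charPoly_mu_add_one_of_covBy f hHY,
    sum_atomsNotBelow_charPoly_mu f hXH hHY, sub_neg_eq_add]
  exact charPoly_eq_charPoly_mul_X_pow_add_sum hf hHY.le _ X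

/-- for a weighted lattice `W = (L, f)` with `L` a finite modular
(relatively) complemented lattice and `H` a coatom of `L`,
`P(W; z) = P(W|_H; z) · (P(W/H; z) + 1) - ∑_{b atom, b ≰ H} P(W/b; z)`. -/
theorem charPoly_coatom_decomposition
    {L : Type*} [Lattice L] [BoundedOrder L] [Finite L] [IsModularLattice L]
    (hcompl : ∀ a b c : L, a ≤ c → c ≤ b → ∃ d : L, c ⊓ d = a ∧ c ⊔ d = b)
    (f : L → ℕ) (hf0 : f ⊥ = 0) (hfmono : Monotone f)
    (μ : L → L → ℤ)
    (hμ_refl : ∀ x : L, μ x x = 1)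
    (hμ_rec : ∀ x y : L, x < y → μ x y = -∑ᶠ z ∈ Set.Ico x y, μ x z)
    (H : L) (hH : IsCoatom H) :
    charPoly μ f ⊥ ⊤ =
      charPoly μ f ⊥ H * (charPoly μ f H ⊤ + 1)
        - ∑ᶠ b ∈ {b : L | IsAtom b ∧ ¬ b ≤ H}, charPoly μ f b ⊤ := by
  let : LocallyFiniteOrder L := .ofFiniteIcc fun x y ↦ (Set.Icc x y).toFinite
  simpa only [bot_covBy_iff, le_top, true_and] using
    charPoly_coatom_decomposition_general hfmono hμ_refl hμ_rec bot_le hH.covBy_top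
end

section
/- Let W = (L, f) be a weighted lattice with L modular and complemented, let H be a coatom of L, and set g := f(⊤) − f(H). Let θ ∈ ℝ be such that θ^g > 0 and P(W/b; θ) ≥ 0 for every atom b of L with b ≰ H. If P(W; θ) > 0, then P(W|_H; θ) > 0. -/
/-- The characteristic polynomial of the minor `W([X,Y])` of the weighted lattice `W = (L, f)`,
evaluated at a real number `θ`:
`P(W([X,Y]); θ) = ∑_{A ∈ L, X ≤ A ≤ Y} μ(X,A) · θ^(f(Y) - f(A))`. -/
noncomputable def charEval {L : Type*} [Lattice L] (μ : L → L → ℤ) (f : L → ℕ) (X Y : L)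
    (θ : ℝ) : ℝ :=
  ∑ᶠ A ∈ Set.Icc X Y, (μ X A : ℝ) * θ ^ (f Y - f A)

/-!
For any element `H ≤ Y`, summing the minors `W([x, Y])` over all `x` with `x ⊓ H = X` collapses, by
a form of Weisner's theorem, to the restriction:
`∑ P(W([x, Y]); θ) = θ ^ (f Y - f H) * P(W([X, H]); θ)`.
The term `x = X` is `P(W([X, Y]); θ) > 0`, so if the other terms are nonnegative the right-hand side
is positive. When `H` is a coatom of a modular lattice, the other terms of the case `X = ⊥`, `Y = ⊤`
are indexed by complements of `H`, which are exactly the atoms not below `H`.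
-/

open Finset IncidenceAlgebra

theorem eq_mu_of_recurrence {𝕜 α : Type*} [AddCommGroup 𝕜] [One 𝕜] [PartialOrder α]
    [LocallyFiniteOrder α] [DecidableEq α] {x : α} {φ : α → 𝕜} (hrefl : φ x = 1)
    (hrec : ∀ y, x < y → φ y = -∑ᶠ z ∈ Set.Ico x y, φ z) (y : α) (hxy : x ≤ y) :
    φ y = mu 𝕜 x y := by
  rcases hxy.eq_or_lt with rfl | hlt
  · rw [hrefl, mu_self]
  · rw [hrec y hlt, mu_eq_neg_sum_Ico_of_ne hlt.ne, ← coe_Ico, finsum_mem_coe_finset]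
    refine congrArg Neg.neg (sum_congr rfl fun z hz => ?_)
    exact eq_mu_of_recurrence hrefl hrec z (mem_Ico.1 hz).1
termination_by #(Icc x y)
decreasing_by
  exact card_lt_card (Icc_ssubset_Icc_right hxy le_rfl (mem_Ico.1 hz).2)

-- Write the condition `x ⊓ a = X` as `∑ z ∈ Icc X (x ⊓ a), mu 𝕜 X z` and sum over `x` first.
theorem sum_mu_filter_inf_eq {𝕜 α : Type*} [Ring 𝕜] [SemilatticeInf α] [LocallyFiniteOrder α]
    [DecidableEq α] [DecidableLE α] (a X y : α) :
    ∑ x ∈ Icc X y with x ⊓ a = X, mu 𝕜 x y = if y ≤ a then mu 𝕜 X y else 0 := by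
  have indicator_eq (x : α) :
      (if x ⊓ a = X then mu 𝕜 x y else 0) = ∑ z ∈ Icc X (x ⊓ a), mu 𝕜 X z * mu 𝕜 x y := by
    rw [← sum_mul, sum_Icc_mu_right, ite_mul, one_mul, zero_mul]
    exact if_congr eq_comm rfl rfl
  calc ∑ x ∈ Icc X y with x ⊓ a = X, mu 𝕜 x y
      = ∑ x ∈ Icc X y, ∑ z ∈ Icc X (x ⊓ a), mu 𝕜 X z * mu 𝕜 x y := by
        simp only [sum_filter, indicator_eq]
    _ = ∑ z ∈ Icc X (y ⊓ a), ∑ x ∈ Icc z y, mu 𝕜 X z * mu 𝕜 x y := by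
        refine sum_comm' fun x z => ?_
        simp only [mem_Icc, le_inf_iff]
        constructor
        · rintro ⟨⟨-, hxy⟩, hXz, hzx, hza⟩
          exact ⟨⟨hzx, hxy⟩, hXz, hzx.trans hxy, hza⟩
        · rintro ⟨⟨hzx, hxy⟩, hXz, -, hza⟩
          exact ⟨⟨hXz.trans hzx, hxy⟩, hXz, hzx, hza⟩
    _ = ∑ z ∈ Icc X (y ⊓ a), if z = y then mu 𝕜 X z else 0 := by
        simp only [← mul_sum, sum_Icc_mu_left, mul_ite, mul_one, mul_zero]
    _ = if y ≤ a then mu 𝕜 X y else 0 := by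
        by_cases hXy : X ≤ y
        · simp [hXy]
        · simp [hXy, apply_eq_zero_of_not_le hXy]

section CharEval

variable {L : Type*} [Lattice L] [LocallyFiniteOrder L]

theorem charEval_eq_sum (μ : L → L → ℤ) (f : L → ℕ) (X Y : L) (θ : ℝ) :
    charEval μ f X Y θ = ∑ A ∈ Icc X Y, (μ X A : ℝ) * θ ^ (f Y - f A) := by
  rw [charEval, ← coe_Icc, finsum_mem_coe_finset]

theorem charEval_eq_charEval_mu [DecidableEq L] {μ : L → L → ℤ} (hμ_refl : ∀ x, μ x x = 1)
    (hμ_rec : ∀ x y, x < y → μ x y = -∑ᶠ z ∈ Set.Ico x y, μ x z) (f : L → ℕ) (X Y : L) (θ : ℝ) :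
    charEval μ f X Y θ = charEval (mu ℤ) f X Y θ :=
  finsum_mem_congr rfl fun A hA => by
    rw [eq_mu_of_recurrence (hμ_refl X) (hμ_rec X) A hA.1]

theorem sum_charEval_mu_filter_inf_eq [DecidableEq L] {f : L → ℕ} (hf : Monotone f) {H Y : L}
    (hHY : H ≤ Y) (X : L) (θ : ℝ) :
    ∑ x ∈ Icc X Y with x ⊓ H = X, charEval (mu ℤ) f x Y θ =
      θ ^ (f Y - f H) * charEval (mu ℤ) f X H θ := by
  classical
  calc ∑ x ∈ Icc X Y with x ⊓ H = X, charEval (mu ℤ) f x Y θ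
      = ∑ x ∈ Icc X Y with x ⊓ H = X, ∑ A ∈ Icc x Y, (mu ℤ x A : ℝ) * θ ^ (f Y - f A) := by
        simp only [charEval_eq_sum]
    _ = ∑ A ∈ Icc X Y, ∑ x ∈ Icc X A with x ⊓ H = X, (mu ℤ x A : ℝ) * θ ^ (f Y - f A) := by
        refine sum_comm' fun x A => ?_
        simp only [mem_filter, mem_Icc]
        constructor
        · rintro ⟨⟨⟨hXx, -⟩, hxH⟩, hxA, hAY⟩
          exact ⟨⟨⟨hXx, hxA⟩, hxH⟩, hXx.trans hxA, hAY⟩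
        · rintro ⟨⟨⟨hXx, hxA⟩, hxH⟩, -, hAY⟩
          exact ⟨⟨⟨hXx, hxA.trans hAY⟩, hxH⟩, hxA, hAY⟩
    _ = ∑ A ∈ Icc X Y, if A ≤ H then (mu ℤ X A : ℝ) * θ ^ (f Y - f A) else 0 := by
        simp only [← sum_mul, ← Int.cast_sum, sum_mu_filter_inf_eq, Int.cast_ite, Int.cast_zero,
          ite_mul, zero_mul]
    _ = ∑ A ∈ Icc X H, (mu ℤ X A : ℝ) * θ ^ (f Y - f A) := by
        rw [← sum_filter]
        congr 1
        ext A
        simp only [mem_filter, mem_Icc]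
        exact ⟨fun hA => ⟨hA.1.1, hA.2⟩, fun hA => ⟨⟨hA.1, hA.2.trans hHY⟩, hA.2⟩⟩
    _ = θ ^ (f Y - f H) * charEval (mu ℤ) f X H θ := by
        rw [charEval_eq_sum, mul_sum]
        refine sum_congr rfl fun A hA => ?_
        rw [mul_left_comm, ← pow_add,
          tsub_add_tsub_cancel (hf hHY) (hf (mem_Icc.1 hA).2)]

theorem charEval_restriction_pos_general {f : L → ℕ} (hf : Monotone f) {μ : L → L → ℤ}
    (hμ_refl : ∀ x, μ x x = 1)
    (hμ_rec : ∀ x y, x < y → μ x y = -∑ᶠ z ∈ Set.Ico x y, μ x z)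
    {X H Y : L} (hXH : X ≤ H) (hHY : H ≤ Y) {θ : ℝ} (hθ : 0 < θ ^ (f Y - f H))
    (hnonneg : ∀ x ∈ Set.Ioc X Y, x ⊓ H = X → 0 ≤ charEval μ f x Y θ)
    (hpos : 0 < charEval μ f X Y θ) :
    0 < charEval μ f X H θ := by
  classical
  simp only [charEval_eq_charEval_mu hμ_refl hμ_rec] at hnonneg hpos ⊢
  refine pos_of_mul_pos_right ?_ hθ.le
  rw [← sum_charEval_mu_filter_inf_eq hf hHY]
  refine sum_pos' (fun x hx => ?_) ⟨X, by simp [hXH, hXH.trans hHY], hpos⟩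
  obtain ⟨hxXY, hxH⟩ := mem_filter.1 hx
  obtain ⟨hXx, hxY⟩ := mem_Icc.1 hxXY
  rcases hXx.eq_or_lt with rfl | hlt
  · exact hpos.le
  · exact hnonneg x ⟨hlt, hxY⟩ hxH

end CharEval

theorem isAtom_and_not_le_of_disjoint_isCoatom {L : Type*} [Lattice L] [BoundedOrder L]
    [IsModularLattice L] {H x : L} (hH : IsCoatom H) (hx : x ≠ ⊥) (hxH : Disjoint x H) :
    IsAtom x ∧ ¬ x ≤ H := by
  have not_le : ¬ x ≤ H := fun hle => hx (hxH.eq_bot_of_le hle)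
  have isCompl : IsCompl x H := ⟨hxH, (hH.not_le_iff_codisjoint.1 not_le).symm⟩
  exact ⟨isCompl.isAtom_iff_isCoatom.2 hH, not_le⟩

/-- for a weighted lattice `W = (L, f)` with `L` a finite modular (relatively)
complemented lattice, `H` a coatom, `g = f ⊤ - f H`, and `θ : ℝ` with `θ^g > 0` and
`P(W/b; θ) ≥ 0` for every atom `b ≰ H`: if `P(W; θ) > 0` then `P(W|_H; θ) > 0`. -/
theorem charEval_restriction_pos
    {L : Type*} [Lattice L] [BoundedOrder L] [Finite L] [IsModularLattice L]
    (hcompl : ∀ a b c : L, a ≤ c → c ≤ b → ∃ d : L, c ⊓ d = a ∧ c ⊔ d = b)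
    (f : L → ℕ) (hf0 : f ⊥ = 0) (hfmono : Monotone f)
    (μ : L → L → ℤ)
    (hμ_refl : ∀ x : L, μ x x = 1)
    (hμ_rec : ∀ x y : L, x < y → μ x y = -∑ᶠ z ∈ Set.Ico x y, μ x z)
    (H : L) (hH : IsCoatom H)
    (θ : ℝ) (hθ : 0 < θ ^ (f ⊤ - f H))
    (hatoms : ∀ b : L, IsAtom b → ¬ b ≤ H → 0 ≤ charEval μ f b ⊤ θ)
    (hpos : 0 < charEval μ f ⊥ ⊤ θ) :
    0 < charEval μ f ⊥ H θ := by
  let := LocallyFiniteOrder.ofFiniteIcc fun a b : L => Set.toFinite (Set.Icc a b)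
  refine charEval_restriction_pos_general hfmono hμ_refl hμ_rec bot_le le_top hθ
    (fun b hb hbH => ?_) hpos
  exact (isAtom_and_not_le_of_disjoint_isCoatom hH hb.1.ne' (disjoint_iff.2 hbH)).elim (hatoms b)
end

section
/- Let W = (L, f) be a weighted lattice with L modular and complemented. Suppose there exists θ ∈ ℝ with θ > 0 such that P(W([X,Y]); θ) ≥ 0 for all X ≤ Y in L. Let T ∈ L satisfy P(W/T; θ) > 0. Then for every complement U of T in L (i.e., U ∧ T = ⊥ and U ∨ T = ⊤), we have P(W|_U; θ) > 0. -/
/-!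
Write `P X Y` for `charEval μ f X Y θ`. Möbius inversion on `[·, Y]` turns the definition of
`P` into `θ ^ (f Y - f A) = ∑_{X ∈ [A, Y]} P X Y`. Substituting this into
`θ ^ (f Y - f U) * P B U = ∑_{A ∈ [B, U]} μ(B, A) * θ ^ (f Y - f A)` and exchanging the sums, the
coefficient of `P X Y` becomes `∑_{A ∈ [B, U ⊓ X]} μ(B, A)`, which is `1` if `U ⊓ X = B` and `0`
otherwise. Hence `θ ^ (f Y - f U) * P B U` is a sum of terms `P X Y ≥ 0`, and each `T` with
`U ⊓ T = B` contributes one of them.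
-/

open Finset IncidenceAlgebra

section Moebius

variable {α R : Type*} [Ring R]

theorem intCast_eq_mu_of_forall_eq_neg_finsum [PartialOrder α] [LocallyFiniteOrder α]
    [DecidableEq α] {μ : α → α → ℤ} (hμ_refl : ∀ x, μ x x = 1)
    (hμ_rec : ∀ x y, x < y → μ x y = -∑ᶠ z ∈ Set.Ico x y, μ x z) {x y : α} (hxy : x ≤ y) :
    (μ x y : R) = mu R x y := by
  rcases hxy.eq_or_lt with rfl | hlt
  · rw [hμ_refl, mu_self, Int.cast_one]
  · rw [hμ_rec x y hlt, ← coe_Ico, finsum_mem_coe_finset, mu_eq_neg_sum_Ico_of_ne hlt.ne,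
      Int.cast_neg, Int.cast_sum]
    congr 1
    refine sum_congr rfl fun z hz => ?_
    exact intCast_eq_mu_of_forall_eq_neg_finsum hμ_refl hμ_rec (mem_Ico.1 hz).1
termination_by #(Icc x y)
decreasing_by
  exact card_lt_card (Icc_ssubset_Icc_right hxy le_rfl (mem_Ico.1 hz).2)

theorem sum_Icc_sum_mu_mul [PartialOrder α] [LocallyFiniteOrder α] [DecidableEq α] (g : α → R)
    {a b : α} (hab : a ≤ b) :
    ∑ x ∈ Icc a b, ∑ c ∈ Icc x b, mu R x c * g c = g a := by
  calc ∑ x ∈ Icc a b, ∑ c ∈ Icc x b, mu R x c * g c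
      = ∑ c ∈ Icc a b, ∑ x ∈ Icc a c, mu R x c * g c :=
        sum_comm' fun x c => by simp only [mem_Icc]; grind
    _ = ∑ c ∈ Icc a b, if a = c then g c else 0 :=
        sum_congr rfl fun c _ => by rw [← sum_mul, sum_Icc_mu_left, ite_mul, one_mul, zero_mul]
    _ = g a := by rw [sum_ite_eq, if_pos (left_mem_Icc.2 hab)]

theorem sum_mu_mul_sum_Icc [SemilatticeInf α] [LocallyFiniteOrder α] [DecidableEq α] (g : α → R)
    (a b u : α) :
    ∑ c ∈ Icc a u, mu R a c * ∑ x ∈ Icc c b, g x = ∑ x ∈ Icc a b with u ⊓ x = a, g x := by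
  calc ∑ c ∈ Icc a u, mu R a c * ∑ x ∈ Icc c b, g x
      = ∑ c ∈ Icc a u, ∑ x ∈ Icc c b, mu R a c * g x := by simp only [mul_sum]
    _ = ∑ x ∈ Icc a b, ∑ c ∈ Icc a (u ⊓ x), mu R a c * g x :=
        sum_comm' fun c x => by simp only [mem_Icc, le_inf_iff]; grind
    _ = ∑ x ∈ Icc a b, if u ⊓ x = a then g x else 0 :=
        sum_congr rfl fun x _ => by
          rw [← sum_mul, sum_Icc_mu_right, ite_mul, one_mul, zero_mul, if_congr eq_comm rfl rfl]
    _ = ∑ x ∈ Icc a b with u ⊓ x = a, g x := (sum_filter _ _).symm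

end Moebius

section CharEval

variable {L : Type*} [Lattice L] [LocallyFiniteOrder L] {μ : L → L → ℤ}

theorem charEval_eq_sum_mu [DecidableEq L] (hμ_refl : ∀ x, μ x x = 1)
    (hμ_rec : ∀ x y, x < y → μ x y = -∑ᶠ z ∈ Set.Ico x y, μ x z) (f : L → ℕ) (X Y : L) (θ : ℝ) :
    charEval μ f X Y θ = ∑ A ∈ Icc X Y, mu ℝ X A * θ ^ (f Y - f A) := by
  rw [charEval, ← coe_Icc, finsum_mem_coe_finset]
  refine sum_congr rfl fun A hA => ?_
  rw [intCast_eq_mu_of_forall_eq_neg_finsum hμ_refl hμ_rec (mem_Icc.1 hA).1]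

theorem sum_charEval_Icc (hμ_refl : ∀ x, μ x x = 1)
    (hμ_rec : ∀ x y, x < y → μ x y = -∑ᶠ z ∈ Set.Ico x y, μ x z) (f : L → ℕ) (θ : ℝ)
    {A Y : L} (hAY : A ≤ Y) :
    ∑ X ∈ Icc A Y, charEval μ f X Y θ = θ ^ (f Y - f A) := by
  classical
  simp only [charEval_eq_sum_mu hμ_refl hμ_rec]
  exact sum_Icc_sum_mu_mul (fun A => θ ^ (f Y - f A)) hAY

theorem pow_mul_charEval_eq_sum_charEval [DecidableEq L] (hμ_refl : ∀ x, μ x x = 1)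
    (hμ_rec : ∀ x y, x < y → μ x y = -∑ᶠ z ∈ Set.Ico x y, μ x z) {f : L → ℕ}
    (hf : Monotone f) (θ : ℝ) (B : L) {U Y : L} (hUY : U ≤ Y) :
    θ ^ (f Y - f U) * charEval μ f B U θ =
      ∑ X ∈ Icc B Y with U ⊓ X = B, charEval μ f X Y θ := by
  have pow_mul_pow {A : L} (hAU : A ≤ U) :
      θ ^ (f Y - f U) * θ ^ (f U - f A) = θ ^ (f Y - f A) := by
    rw [← pow_add, tsub_add_tsub_cancel (hf hUY) (hf hAU)]
  rw [charEval_eq_sum_mu hμ_refl hμ_rec, ← sum_mu_mul_sum_Icc, mul_sum]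
  refine sum_congr rfl fun A hA => ?_
  have hAU : A ≤ U := (mem_Icc.1 hA).2
  rw [sum_charEval_Icc hμ_refl hμ_rec f θ (hAU.trans hUY), ← pow_mul_pow hAU, mul_left_comm]

theorem charEval_restriction_of_contraction_pos_general {f : L → ℕ} (hf : Monotone f)
    (hμ_refl : ∀ x, μ x x = 1)
    (hμ_rec : ∀ x y, x < y → μ x y = -∑ᶠ z ∈ Set.Ico x y, μ x z)
    {θ : ℝ} (hθ : 0 ≤ θ) {T U Y : L} (hTY : T ≤ Y) (hUY : U ≤ Y)
    (hminors : ∀ X ≤ Y, U ⊓ X = U ⊓ T → 0 ≤ charEval μ f X Y θ)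
    (hT : 0 < charEval μ f T Y θ) :
    0 < charEval μ f (U ⊓ T) U θ := by
  classical
  have hsum_pos : 0 < ∑ X ∈ Icc (U ⊓ T) Y with U ⊓ X = U ⊓ T, charEval μ f X Y θ := by
    refine sum_pos' (fun X hX => ?_) ⟨T, ?_, hT⟩
    · obtain ⟨hXY, hUX⟩ := mem_filter.1 hX
      exact hminors X (mem_Icc.1 hXY).2 hUX
    · exact mem_filter.2 ⟨mem_Icc.2 ⟨inf_le_right, hTY⟩, rfl⟩
  rw [← pow_mul_charEval_eq_sum_charEval hμ_refl hμ_rec hf θ _ hUY] at hsum_pos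
  exact pos_of_mul_pos_right hsum_pos (pow_nonneg hθ _)

end CharEval

/-- for a weighted lattice `W = (L, f)` with `L` a finite modular (relatively)
complemented lattice and `θ > 0` with `P(W([X,Y]); θ) ≥ 0` for all `X ≤ Y` (all minors):
if `T ∈ L` satisfies `P(W/T; θ) > 0`, then for every complement `U` of `T`,
`P(W|_U; θ) > 0`. -/
theorem charEval_restriction_of_contraction_pos
    {L : Type*} [Lattice L] [BoundedOrder L] [Finite L] [IsModularLattice L]
    (hcompl : ∀ a b c : L, a ≤ c → c ≤ b → ∃ d : L, c ⊓ d = a ∧ c ⊔ d = b)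
    (f : L → ℕ) (hf0 : f ⊥ = 0) (hfmono : Monotone f)
    (μ : L → L → ℤ)
    (hμ_refl : ∀ x : L, μ x x = 1)
    (hμ_rec : ∀ x y : L, x < y → μ x y = -∑ᶠ z ∈ Set.Ico x y, μ x z)
    (θ : ℝ) (hθ : 0 < θ)
    (hminors : ∀ X Y : L, X ≤ Y → 0 ≤ charEval μ f X Y θ)
    (T : L) (hT : 0 < charEval μ f T ⊤ θ)
    (U : L) (hUT : U ⊓ T = ⊥) (hUT' : U ⊔ T = ⊤) :
    0 < charEval μ f ⊥ U θ := by
  classical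
  have := Fintype.ofFinite L
  have := Fintype.toLocallyFiniteOrder (α := L)
  exact hUT ▸ charEval_restriction_of_contraction_pos_general hfmono hμ_refl hμ_rec hθ.le le_top
    le_top (fun X hX _ => hminors X ⊤ hX) hT
end

section
/- Let W = (L, f) be a weighted lattice with L modular and complemented. Suppose there exists θ ∈ ℝ with θ > 0 such that P(W([X,Y]); θ) ≥ 0 for all X ≤ Y in L. Let U ∈ L satisfy P(W|_U; θ) > 0. Then there exist a complement V of U in L (i.e., V ∧ U = ⊥ and V ∨ U = ⊤) and an element T ≤ V such that P(W/T; θ) > 0. -/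
/-!
Let `F S = P(W/S; θ)`. Möbius inversion from the top turns the definition of `F` into
`θ ^ (f ⊤ - f A) = ∑_{S ≥ A} F S`. Substituting this into `P(W|_U; θ)` and summing over `A` first,
the defining property of `μ` keeps exactly the `S` with `S ⊓ U = ⊥`:
`θ ^ (f ⊤ - f U) * P(W|_U; θ) = ∑_{S ⊓ U = ⊥} P(W/S; θ)`.
A positive left-hand side yields `T` disjoint from `U` with `P(W/T; θ) > 0`, and in a complemented
modular lattice `T` extends to a complement of `U`.
-/

open Finset IncidenceAlgebra

section Moebius

variable {α R M : Type*}

/-- `μ` is the Möbius function of the order `α`, characterised by its recursion. The values `μ x y`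
with `x ≰ y` are left arbitrary, so `μ` agrees with `IncidenceAlgebra.mu` only where `x ≤ y`. -/
structure IsMoebius [Preorder α] [AddCommGroup R] [One R] (μ : α → α → R) : Prop where
  self_eq_one (x : α) : μ x x = 1
  eq_neg_finsum_Ico (x y : α) : x < y → μ x y = -∑ᶠ z ∈ Set.Ico x y, μ x z

variable [DecidableEq α]

theorem IsMoebius.eq_mu [PartialOrder α] [LocallyFiniteOrder α] [AddCommGroup R] [One R]
    {μ : α → α → R} (hμ : IsMoebius μ) {x y : α} (hxy : x ≤ y) : μ x y = mu R x y := by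
  induction hcard : #(Icc x y) using Nat.strong_induction_on generalizing y with
  | _ n ih =>
  obtain rfl | hlt := hxy.eq_or_lt
  · rw [hμ.self_eq_one, mu_self]
  · rw [hμ.eq_neg_finsum_Ico x y hlt, mu_eq_neg_sum_Ico_of_ne hlt.ne, ← coe_Ico,
      finsum_mem_coe_finset]
    congr 1
    refine sum_congr rfl fun z hz ↦ ?_
    obtain ⟨hxz, hzy⟩ := mem_Ico.mp hz
    exact ih _ (hcard ▸ card_lt_card (Icc_ssubset_Icc_right hxy le_rfl hzy)) hxz rfl

variable [Ring R] [AddCommGroup M] [Module R M]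

theorem sum_Ici_sum_Ici_mu_smul [PartialOrder α] [OrderTop α] [LocallyFiniteOrder α]
    (g : α → M) (a : α) : ∑ s ∈ Ici a, ∑ b ∈ Ici s, mu R s b • g b = g a := by
  calc ∑ s ∈ Ici a, ∑ b ∈ Ici s, mu R s b • g b
      = ∑ b ∈ Ici a, ∑ s ∈ Icc a b, mu R s b • g b :=
        sum_comm' fun s b ↦ by
          simp only [mem_Ici, mem_Icc]
          exact ⟨fun ⟨has, hsb⟩ ↦ ⟨⟨has, hsb⟩, has.trans hsb⟩, fun h ↦ h.1⟩
    _ = ∑ b ∈ Ici a, if a = b then g b else 0 := by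
        simp only [← sum_smul, sum_Icc_mu_left, ite_smul, one_smul, zero_smul]
    _ = g a := by rw [sum_ite_eq, if_pos (mem_Ici.mpr le_rfl)]

theorem sum_Icc_mu_smul_sum_Ici [SemilatticeInf α] [OrderTop α] [LocallyFiniteOrder α]
    (F : α → M) (x u : α) :
    ∑ a ∈ Icc x u, mu R x a • ∑ s ∈ Ici a, F s = ∑ s ∈ Ici x with s ⊓ u = x, F s := by
  calc ∑ a ∈ Icc x u, mu R x a • ∑ s ∈ Ici a, F s
      = ∑ a ∈ Icc x u, ∑ s ∈ Ici a, mu R x a • F s := by simp only [smul_sum]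
    _ = ∑ s ∈ Ici x, ∑ a ∈ Icc x (s ⊓ u), mu R x a • F s :=
        sum_comm' fun a s ↦ by
          simp only [mem_Ici, mem_Icc, le_inf_iff]
          exact ⟨fun ⟨⟨hxa, hau⟩, has⟩ ↦ ⟨⟨hxa, has, hau⟩, hxa.trans has⟩,
            fun ⟨⟨hxa, has, hau⟩, _⟩ ↦ ⟨⟨hxa, hau⟩, has⟩⟩
    _ = ∑ s ∈ Ici x with s ⊓ u = x, F s := by
        simp only [← sum_smul, sum_Icc_mu_right, ite_smul, one_smul, zero_smul, sum_filter,
          eq_comm (a := x)]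

end Moebius

section CharEval

variable {L : Type*} [Lattice L] {μ : L → L → ℤ}

theorem charEval_eq_sum_mu_smul [LocallyFiniteOrder L] [DecidableEq L] (hμ : IsMoebius μ)
    (f : L → ℕ) (X Y : L) (θ : ℝ) :
    charEval μ f X Y θ = ∑ A ∈ Icc X Y, mu ℤ X A • θ ^ (f Y - f A) := by
  rw [charEval, ← coe_Icc, finsum_mem_coe_finset]
  refine sum_congr rfl fun A hA ↦ ?_
  rw [hμ.eq_mu (mem_Icc.mp hA).1, zsmul_eq_mul]

theorem pow_mul_charEval_eq_sum_charEval_top [OrderTop L] [LocallyFiniteOrder L] [DecidableEq L]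
    (hμ : IsMoebius μ) {f : L → ℕ} (hf : Monotone f) (X U : L) (θ : ℝ) :
    θ ^ (f ⊤ - f U) * charEval μ f X U θ = ∑ S ∈ Ici X with S ⊓ U = X, charEval μ f S ⊤ θ := by
  have inversion (A : L) : ∑ S ∈ Ici A, charEval μ f S ⊤ θ = θ ^ (f ⊤ - f A) := by
    simp only [charEval_eq_sum_mu_smul hμ, Icc_top]
    exact sum_Ici_sum_Ici_mu_smul _ A
  calc θ ^ (f ⊤ - f U) * charEval μ f X U θ
      = ∑ A ∈ Icc X U, mu ℤ X A • θ ^ (f ⊤ - f A) := by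
        rw [charEval_eq_sum_mu_smul hμ, mul_sum]
        refine sum_congr rfl fun A hA ↦ ?_
        rw [mul_smul_comm, ← pow_add, tsub_add_tsub_cancel (hf le_top) (hf (mem_Icc.mp hA).2)]
    _ = ∑ A ∈ Icc X U, mu ℤ X A • ∑ S ∈ Ici A, charEval μ f S ⊤ θ := by simp only [inversion]
    _ = ∑ S ∈ Ici X with S ⊓ U = X, charEval μ f S ⊤ θ := sum_Icc_mu_smul_sum_Ici _ X U

theorem exists_inf_eq_and_charEval_top_pos [OrderTop L] [LocallyFiniteOrder L] (hμ : IsMoebius μ)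
    {f : L → ℕ} (hf : Monotone f) {X U : L} {θ : ℝ} (hθ : 0 < θ) (hU : 0 < charEval μ f X U θ) :
    ∃ T, T ⊓ U = X ∧ 0 < charEval μ f T ⊤ θ := by
  classical
  have sum_pos : 0 < ∑ S ∈ Ici X with S ⊓ U = X, charEval μ f S ⊤ θ := by
    rw [← pow_mul_charEval_eq_sum_charEval_top hμ hf]
    positivity
  obtain ⟨T, hT, hpos⟩ := exists_lt_of_sum_lt (sum_const_zero.trans_lt sum_pos)
  exact ⟨T, (mem_filter.mp hT).2, hpos⟩

theorem charEval_contraction_of_restriction_pos_general [BoundedOrder L] [Finite L]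
    [IsModularLattice L] [ComplementedLattice L] (hμ : IsMoebius μ) {f : L → ℕ}
    (hf : Monotone f) {θ : ℝ} (hθ : 0 < θ) {U : L} (hU : 0 < charEval μ f ⊥ U θ) :
    ∃ V T, IsCompl V U ∧ T ≤ V ∧ 0 < charEval μ f T ⊤ θ := by
  classical
  have := Fintype.ofFinite L
  have := Fintype.toLocallyFiniteOrder (α := L)
  obtain ⟨T, hTU, hpos⟩ := exists_inf_eq_and_charEval_top_pos hμ hf hθ hU
  obtain ⟨V, hTV, hVU⟩ := (disjoint_iff.mpr hTU).exists_isCompl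
  exact ⟨V, T, hVU, hTV, hpos⟩

end CharEval

/-- for a weighted lattice `W = (L, f)` with `L` a finite modular (relatively)
complemented lattice and `θ > 0` with `P(W([X,Y]); θ) ≥ 0` for all `X ≤ Y` (all minors):
if `U ∈ L` satisfies `P(W|_U; θ) > 0`, then there exist a complement `V` of `U` and
`T ≤ V` with `P(W/T; θ) > 0`. -/
theorem charEval_contraction_of_restriction_pos
    {L : Type*} [Lattice L] [BoundedOrder L] [Finite L] [IsModularLattice L]
    (hcompl : ∀ a b c : L, a ≤ c → c ≤ b → ∃ d : L, c ⊓ d = a ∧ c ⊔ d = b)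
    (f : L → ℕ) (hf0 : f ⊥ = 0) (hfmono : Monotone f)
    (μ : L → L → ℤ)
    (hμ_refl : ∀ x : L, μ x x = 1)
    (hμ_rec : ∀ x y : L, x < y → μ x y = -∑ᶠ z ∈ Set.Ico x y, μ x z)
    (θ : ℝ) (hθ : 0 < θ)
    (hminors : ∀ X Y : L, X ≤ Y → 0 ≤ charEval μ f X Y θ)
    (U : L) (hU : 0 < charEval μ f ⊥ U θ) :
    ∃ V T : L, V ⊓ U = ⊥ ∧ V ⊔ U = ⊤ ∧ T ≤ V ∧ 0 < charEval μ f T ⊤ θ := by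
  have : ComplementedLattice L :=
    ⟨fun a ↦ (hcompl ⊥ ⊤ a bot_le le_top).imp fun _ h ↦ .of_eq h.1 h.2⟩
  simpa only [isCompl_iff, disjoint_iff, codisjoint_iff, and_assoc] using
    charEval_contraction_of_restriction_pos_general ⟨hμ_refl, hμ_rec⟩ hfmono hθ hU
end

section
/- (Critical Theorem for q-polymatroids.) Let t be a positive integer, let C be an F_q-[n×m, k] rank-metric code, and let U be an F_q-subspace of F_q^n. Then the number of t-tuples (X_1, …, X_t) ∈ C^t such that colsp(X_1) + ⋯ + colsp(X_t) = U equals ∑_{V : Uᗮ ≤ V ≤ F_q^n} μ(Uᗮ, V)·|C_V|^t, where μ is the Möbius function of the lattice of F_q-subspaces of F_q^n. -/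
open Matrix

variable {F : Type*} [Field F] {n m : ℕ}

/-- Column space (support) of a matrix `X ∈ F^(n×m)`, as a subspace of `F^n`. -/
def colsp (X : Matrix (Fin n) (Fin m) F) : Submodule F (Fin n → F) :=
  LinearMap.range X.mulVecLin

/-- Orthogonal complement of a subspace of `F^n` w.r.t. the standard dot product. -/
def dotPerp (U : Submodule F (Fin n → F)) : Submodule F (Fin n → F) where
  carrier := {v | ∀ u ∈ U, ∑ i, u i * v i = 0}
  add_mem' := by
    intro a b ha hb u hu
    have : ∑ i, u i * (a + b) i = (∑ i, u i * a i) + ∑ i, u i * b i := by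
      simp [Pi.add_apply, mul_add, Finset.sum_add_distrib]
    simp only [Set.mem_setOf_eq] at *
    rw [this, ha u hu, hb u hu, add_zero]
  zero_mem' := by
    intro u hu
    simp
  smul_mem' := by
    intro c a ha u hu
    simp only [Set.mem_setOf_eq] at *
    have : ∑ i, u i * (c • a) i = c * ∑ i, u i * a i := by
      rw [Finset.mul_sum]
      refine Finset.sum_congr rfl fun i _ => ?_
      simp [Pi.smul_apply, smul_eq_mul]; ring
    rw [this, ha u hu, mul_zero]

/-!
Since `dotPerp` is an order-reversing involution, `∑ colsp (X_i) = U` means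
`⨅ dotPerp (colsp X_i) = dotPerp U`. For a fixed `V`, a tuple satisfies
`V ≤ ⨅ dotPerp (colsp X_i)` exactly when each of its entries lies in `C_V`, so there are `|C_V|^t`
such tuples. Möbius inversion recovers from these numbers how often the infimum equals `dotPerp U`.
-/

section IncidenceAlgebra

open IncidenceAlgebra

theorem eq_mu_of_eq_neg_sum_Ico {P R : Type*} [PartialOrder P] [LocallyFiniteOrder P]
    [DecidableEq P] [AddCommGroup R] [One R] {f : P → R} {a : P} (hf_self : f a = 1)
    (hf_rec : ∀ b, a < b → f b = -∑ c ∈ Finset.Ico a b, f c) {b : P} (hab : a ≤ b) :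
    f b = mu R a b := by
  obtain rfl | hlt := hab.eq_or_lt
  · rw [hf_self, mu_self]
  · rw [hf_rec b hlt, mu_eq_neg_sum_Ico_of_ne hlt.ne]
    refine congrArg Neg.neg (Finset.sum_congr rfl fun c hc ↦ ?_)
    obtain ⟨hac, hcb⟩ := Finset.mem_Ico.1 hc
    have : (Finset.Icc a c).card < (Finset.Icc a b).card :=
      Finset.card_lt_card (Finset.Icc_ssubset_Icc_right hab le_rfl hcb)
    exact eq_mu_of_eq_neg_sum_Ico hf_self hf_rec hac
termination_by (Finset.Icc a b).card

variable {α P : Type*} [Finite α]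

theorem card_le_eq_sum_card_eq [PartialOrder P] [OrderTop P] [LocallyFiniteOrder P]
    (s : α → P) (b : P) :
    Nat.card {x // b ≤ s x} = ∑ c ∈ Finset.Ici b, Nat.card {x // s x = c} := by
  classical
  have := Fintype.ofFinite α
  have hmaps : ∀ x ∈ ({x | b ≤ s x} : Finset α), s x ∈ Finset.Ici b := by simp
  simp only [Nat.card_eq_fintype_card, Fintype.card_subtype]
  rw [Finset.card_eq_sum_card_fiberwise hmaps]
  refine Finset.sum_congr rfl fun c hc ↦ congrArg Finset.card ?_
  ext x
  simpa using fun hxc : s x = c ↦ hxc ▸ Finset.mem_Ici.1 hc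

theorem card_eq_eq_sum_mu_mul_card_le (R : Type*) [Ring R] [PartialOrder P] [OrderTop P]
    [LocallyFiniteOrder P] [DecidableEq P] (s : α → P) (a : P) :
    (Nat.card {x // s x = a} : R) =
      ∑ b ∈ Finset.Ici a, mu R a b * (Nat.card {x // b ≤ s x} : R) :=
  moebius_inversion_top (fun c ↦ (Nat.card {x // s x = c} : R))
    (fun b ↦ (Nat.card {x // b ≤ s x} : R))
    (fun b ↦ by rw [card_le_eq_sum_card_eq, Nat.cast_sum]) a

end IncidenceAlgebra

theorem card_le_iInf_eq_card_pow {α ι L : Type*} [Finite ι] [CompleteLattice L]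
    (s : α → L) (b : L) :
    Nat.card {x : ι → α // b ≤ ⨅ i, s (x i)} = Nat.card {c // b ≤ s c} ^ Nat.card ι := by
  simp only [le_iInf_iff]
  rw [Nat.card_congr (Equiv.subtypePiEquivPi (p := fun _ c ↦ b ≤ s c)), Nat.card_fun]

section FiniteLattice

variable {α ι L R : Type*} [Finite α] [Finite ι] [CompleteLattice L] [Finite L] [Ring R]

theorem card_iInf_eq_eq_finsum_mul_card_pow (s : α → L) {a : L} {f : L → R} (hf_self : f a = 1)
    (hf_rec : ∀ b, a < b → f b = -∑ᶠ c ∈ Set.Ico a b, f c) :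
    (Nat.card {x : ι → α // ⨅ i, s (x i) = a} : R) =
      ∑ᶠ b ∈ Set.Ici a, f b * (Nat.card {c // b ≤ s c} : R) ^ Nat.card ι := by
  classical
  have := Fintype.ofFinite L
  let : LocallyFiniteOrder L := Fintype.toLocallyFiniteOrder
  simp only [← Finset.coe_Ico, finsum_mem_coe_finset] at hf_rec
  rw [card_eq_eq_sum_mu_mul_card_le, ← Finset.coe_Ici, finsum_mem_coe_finset]
  refine Finset.sum_congr rfl fun b hb ↦ ?_
  rw [card_le_iInf_eq_card_pow, Nat.cast_pow,
    eq_mu_of_eq_neg_sum_Ico hf_self hf_rec (Finset.mem_Ici.1 hb)]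

end FiniteLattice

theorem mem_dotPerp_iff {U : Submodule F (Fin n → F)} {v : Fin n → F} :
    v ∈ dotPerp U ↔ ∀ u ∈ U, u ⬝ᵥ v = 0 :=
  Iff.rfl

theorem le_dotPerp_comm {U V : Submodule F (Fin n → F)} : U ≤ dotPerp V ↔ V ≤ dotPerp U := by
  simp only [SetLike.le_def, mem_dotPerp_iff]
  exact ⟨fun h v hv u hu ↦ dotProduct_comm u v ▸ h hu v hv,
    fun h u hu v hv ↦ dotProduct_comm v u ▸ h hv u hu⟩

theorem dotPerp_iSup {ι : Sort*} (W : ι → Submodule F (Fin n → F)) :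
    dotPerp (⨆ i, W i) = ⨅ i, dotPerp (W i) :=
  eq_of_forall_le_iff fun V ↦ by
    rw [le_dotPerp_comm, iSup_le_iff, le_iInf_iff]
    exact forall_congr' fun _ ↦ le_dotPerp_comm

theorem dotPerp_involutive :
    Function.Involutive (dotPerp : Submodule F (Fin n → F) → Submodule F (Fin n → F)) := by
  let B : LinearMap.BilinForm F (Fin n → F) := dotProductBilin F F
  have hB_refl : B.IsRefl := fun u v huv ↦ (dotProduct_comm v u).trans huv
  have hB_nondegenerate : B.Nondegenerate :=
    hB_refl.nondegenerate_iff_separatingLeft.2 fun _ ↦ dotProduct_eq_zero _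
  exact LinearMap.BilinForm.orthogonal_orthogonal hB_nondegenerate hB_refl

theorem critical_theorem_general [Finite F] {ι : Type*} [Finite ι]
    (C : Set (Matrix (Fin n) (Fin m) F))
    (μ : Submodule F (Fin n → F) → Submodule F (Fin n → F) → ℤ)
    (hμ_refl : ∀ X, μ X X = 1)
    (hμ_rec : ∀ X Y, X < Y → μ X Y = -∑ᶠ Z ∈ Set.Ico X Y, μ X Z)
    (U : Submodule F (Fin n → F)) :
    (Nat.card {x : ι → C // ⨆ i, colsp (x i : Matrix (Fin n) (Fin m) F) = U} : ℤ) =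
      ∑ᶠ V ∈ Set.Ici (dotPerp U),
        μ (dotPerp U) V * (Nat.card {X // X ∈ C ∧ colsp X ≤ dotPerp V} : ℤ) ^ Nat.card ι := by
  have hsupport (x : ι → C) : ⨆ i, colsp (x i : Matrix (Fin n) (Fin m) F) = U ↔
      ⨅ i, dotPerp (colsp (x i : Matrix (Fin n) (Fin m) F)) = dotPerp U := by
    rw [← dotPerp_iSup, dotPerp_involutive.injective.eq_iff]
  have hcode (V : Submodule F (Fin n → F)) :
      Nat.card {X // X ∈ C ∧ colsp X ≤ dotPerp V} =
        Nat.card {X : C // V ≤ dotPerp (colsp (X : Matrix (Fin n) (Fin m) F))} := by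
    simp only [le_dotPerp_comm (V := V)]
    exact Nat.card_congr (Equiv.subtypeSubtypeEquivSubtypeInter (· ∈ C) _).symm
  simp only [hsupport, hcode]
  exact card_iInf_eq_eq_finsum_mul_card_pow
    (fun X : C ↦ dotPerp (colsp (X : Matrix (Fin n) (Fin m) F)))
    (hμ_refl _) (hμ_rec _)

/-- Critical Theorem for `q`-polymatroids: the number of `t`-tuples of
codewords of `C` whose supports sum to `U` equals `∑_{V ≥ Uᗮ} μ(Uᗮ, V) |C_V|^t`. -/
theorem critical_theorem
    [Fintype F] (hn : 0 < n) (hm : 0 < m)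
    (t : ℕ) (ht : 0 < t)
    (C : Submodule F (Matrix (Fin n) (Fin m) F)) (k : ℕ) (hk : Module.finrank F C = k)
    (μ : Submodule F (Fin n → F) → Submodule F (Fin n → F) → ℤ)
    (hμ_refl : ∀ X, μ X X = 1)
    (hμ_rec : ∀ X Y, X < Y → μ X Y = -∑ᶠ Z ∈ Set.Ico X Y, μ X Z)
    (U : Submodule F (Fin n → F)) :
    (Nat.card {x : Fin t → C // (⨆ i, colsp ((x i : Matrix (Fin n) (Fin m) F))) = U} : ℤ)
      = ∑ᶠ V ∈ Set.Icc (dotPerp U) ⊤,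
          μ (dotPerp U) V *
            (Nat.card {X : Matrix (Fin n) (Fin m) F // X ∈ C ∧ colsp X ≤ dotPerp V} : ℤ) ^ t := by
  simpa only [Set.Icc_top, Nat.card_fin, SetLike.mem_coe, SetLike.coe_sort_coe] using
    critical_theorem_general (ι := Fin t) (SetLike.coe C) μ hμ_refl hμ_rec U
end

section
/- Let C be a non-degenerate F_{q^m}-[n, k] rank-metric code with generator matrix G (a k×n matrix over F_{q^m} whose rows form an F_{q^m}-basis of C), and let U ≤ F_{q^m}^k be the F_q-span of the columns of G. Then the critical exponent crit(M[C]) equals the minimum number r of F_{q^m}-hyperplanes H_1, …, H_r of F_{q^m}^k (i.e., F_{q^m}-subspaces of dimension k−1) such that U ∩ H_1 ∩ ⋯ ∩ H_r = 0. -/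
/-- The support of a vector `x ∈ K^n` over the subfield `F`: the `F`-subspace of `F^n`
consisting of all `(λ(x_1), …, λ(x_n))` for `λ ∈ Hom_F(K, F)`. -/
def vsupp (F : Type*) {K : Type*} [Field F] [Field K] [Algebra F K] {n : ℕ}
    (x : Fin n → K) : Submodule F (Fin n → F) :=
  LinearMap.range
    ({ toFun := fun φ : K →ₗ[F] F => fun i => φ (x i)
       map_add' := by intro φ ψ; ext i; simp
       map_smul' := by intro c φ; ext i; simp } : (K →ₗ[F] F) →ₗ[F] (Fin n → F))

/-!
Write each codeword of `C` as `(f (v₁), …, f (vₙ))`, where `v₁, …, vₙ` are the columns of `G` and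
`f` is a `K`-linear functional on `K^k`. By duality over `F`, codewords given by functionals
`f₁, …, f_t` have supports summing to `F^n` if and only if the vectors `(f₁ (vⱼ), …, f_t (vⱼ))`,
`j = 1, …, n`, are `F`-linearly independent, that is, if and only if the `vⱼ` are `F`-independent
and `U` meets `ker f₁ ∩ ⋯ ∩ ker f_t` trivially. Non-degeneracy is the independence of the `vⱼ`,
the kernels of the nonzero functionals are exactly the hyperplanes, and replacing a zero functional
by a nonzero one only shrinks the intersection.
-/

section LinearAlgebra

theorem linearIndependent_comp_iff_disjoint_ker {R M N ι : Type*} [Ring R] [AddCommGroup M]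
    [Module R M] [AddCommGroup N] [Module R N] (f : M →ₗ[R] N) {v : ι → M} :
    LinearIndependent R (f ∘ v) ↔
      LinearIndependent R v ∧ Disjoint (Submodule.span R (Set.range v)) (LinearMap.ker f) := by
  refine ⟨fun h ↦ ⟨h.of_comp f, ?_⟩, fun ⟨hv, hf⟩ ↦ hv.map hf⟩
  rw [Submodule.disjoint_def, ← Finsupp.range_linearCombination]
  rintro _ ⟨c, rfl⟩ hc
  rw [LinearMap.mem_ker, Finsupp.apply_linearCombination] at hc
  rw [linearIndependent_iff.mp h c hc, map_zero]

variable {K V : Type*} [Field K] [AddCommGroup V] [Module K V]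

theorem eq_top_iff_forall_dual_eq_zero {W : Submodule K V} :
    W = ⊤ ↔ ∀ f : Module.Dual K V, W ≤ LinearMap.ker f → f = 0 := by
  rw [← Submodule.dualAnnihilator_eq_bot_iff, Submodule.eq_bot_iff]
  simp only [Submodule.mem_dualAnnihilator, SetLike.le_def, LinearMap.mem_ker]

theorem isCoatom_iff_finrank_add_one [FiniteDimensional K V] {H : Submodule K V} :
    IsCoatom H ↔ Module.finrank K H + 1 = Module.finrank K V := by
  rw [← isSimpleModule_iff_isCoatom, isSimpleModule_iff_finrank_eq_one,
    ← H.finrank_quotient_add_finrank]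
  omega

theorem exists_eq_ker_of_isCoatom {H : Submodule K V} (hH : IsCoatom H) :
    ∃ f : Module.Dual K V, H = LinearMap.ker f := by
  obtain ⟨f, hf, hle⟩ := H.exists_le_ker_of_lt_top hH.lt_top
  exact ⟨f, ((hH.le_iff_eq (LinearMap.ker_eq_top.not.mpr hf)).mp hle).symm⟩

theorem exists_isCoatom_le_ker [Nontrivial V] (f : Module.Dual K V) :
    ∃ H : Submodule K V, IsCoatom H ∧ H ≤ LinearMap.ker f := by
  obtain rfl | hf := eq_or_ne f 0
  · obtain ⟨H, hH⟩ := IsCoatomic.exists_coatom (α := Submodule K V)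
    exact ⟨H, hH, by simp⟩
  · exact ⟨_, LinearMap.isCoatom_ker_of_surjective (LinearMap.surjective hf), le_rfl⟩

end LinearAlgebra

section Support

variable {F K : Type*} [Field F] [Field K] [Algebra F K] {n : ℕ}

theorem vsupp_le_ker_dotProductEquiv_iff {x : Fin n → K} {a : Fin n → F} :
    vsupp F x ≤ LinearMap.ker (dotProductEquiv F (Fin n) a) ↔ ∑ j, a j • x j = 0 := by
  rw [← Module.forall_dual_apply_eq_zero_iff F]
  simp [vsupp, SetLike.le_def, dotProduct]

theorem iSup_vsupp_eq_top_iff_linearIndependent {ι : Type*} {x : ι → Fin n → K} :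
    ⨆ i, vsupp F (x i) = ⊤ ↔ LinearIndependent F fun j i ↦ x i j := by
  rw [eq_top_iff_forall_dual_eq_zero, (dotProductEquiv F (Fin n)).surjective.forall,
    Fintype.linearIndependent_iff]
  simp only [iSup_le_iff, vsupp_le_ker_dotProductEquiv_iff, LinearEquiv.map_eq_zero_iff,
    funext_iff, Finset.sum_apply, Pi.smul_apply, Pi.zero_apply]

variable {V : Type*} [AddCommGroup V] [Module K V] [Module F V] [IsScalarTower F K V]

theorem iSup_vsupp_comp_eq_top_iff {ι : Type*} {f : ι → Module.Dual K V} {v : Fin n → V} :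
    ⨆ i, vsupp F (f i ∘ v) = ⊤ ↔ LinearIndependent F v ∧
      Disjoint (Submodule.span F (Set.range v))
        (⨅ i, (LinearMap.ker (f i)).restrictScalars F) := by
  rw [iSup_vsupp_eq_top_iff_linearIndependent]
  simpa only [LinearMap.ker_pi, LinearMap.ker_restrictScalars] using!
    linearIndependent_comp_iff_disjoint_ker (LinearMap.pi fun i ↦ (f i).restrictScalars F) (v := v)

end Support

section EvaluationCode

/-- The evaluation map `f ↦ (f (v₁), …, f (vₙ))` on the `K`-linear functionals of `V`, which
parametrizes the codewords by functionals. -/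
def evaluationMap (K : Type*) {V : Type*} [Field K] [AddCommGroup V] [Module K V] {n : ℕ}
    (v : Fin n → V) : Module.Dual K V →ₗ[K] (Fin n → K) :=
  LinearMap.pi fun j ↦ Module.Dual.eval K V (v j)

/-- The code of all evaluation vectors `(f (v₁), …, f (vₙ))`: the coordinate-free form of the code
whose generator matrix has columns `v₁, …, vₙ`. -/
def evaluationCode (K : Type*) {V : Type*} [Field K] [AddCommGroup V] [Module K V] {n : ℕ}
    (v : Fin n → V) : Submodule K (Fin n → K) :=
  LinearMap.range (evaluationMap K v)

theorem span_range_row_eq_evaluationCode {K ι : Type*} [Field K] [Finite ι] {n : ℕ}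
    (G : Matrix ι (Fin n) K) :
    Submodule.span K (Set.range fun i ↦ G i) = evaluationCode K fun j i ↦ G i j := by
  classical
  cases nonempty_fintype ι
  have evaluationMap_comp_dotProductEquiv :
      evaluationMap K (fun j i ↦ G i j) ∘ₗ (dotProductEquiv K ι).toLinearMap = G.vecMulLinear := rfl
  rw [evaluationCode, ← LinearMap.range_comp_of_range_eq_top _ (dotProductEquiv K ι).range,
    evaluationMap_comp_dotProductEquiv, range_vecMulLinear]
  rfl

variable {F K V : Type*} [Field F] [Field K] [Algebra F K] [AddCommGroup V] [Module K V]
  [Module F V] [IsScalarTower F K V] {n : ℕ} {v : Fin n → V}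

theorem linearIndependent_of_iSup_vsupp_evaluationCode_eq_top
    (hv : ⨆ x : evaluationCode K v, vsupp F (x : Fin n → K) = ⊤) : LinearIndependent F v := by
  have iSup_functionals : ⨆ f : Module.Dual K V, vsupp F (f ∘ v) = ⊤ :=
    ((evaluationMap K v).surjective_rangeRestrict.iSup_comp
      fun x : evaluationCode K v ↦ vsupp F (x : Fin n → K)).trans hv
  exact (iSup_vsupp_comp_eq_top_iff.mp iSup_functionals).1

theorem exists_iSup_vsupp_evaluationCode_eq_top_iff [Nontrivial V] (hv : LinearIndependent F v)
    {ι : Type*} :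
    (∃ x : ι → evaluationCode K v, ⨆ i, vsupp F (x i : Fin n → K) = ⊤) ↔
      ∃ H : ι → Submodule K V, (∀ i, IsCoatom (H i)) ∧
        Submodule.span F (Set.range v) ⊓ ⨅ i, (H i).restrictScalars F = ⊥ := by
  have exists_codewords_iff_exists_functionals :
      (∃ x : ι → evaluationCode K v, ⨆ i, vsupp F (x i : Fin n → K) = ⊤) ↔
        ∃ f : ι → Module.Dual K V, ⨆ i, vsupp F (f i ∘ v) = ⊤ :=
    (evaluationMap K v).surjective_rangeRestrict.comp_left.exists
  simp only [exists_codewords_iff_exists_functionals, iSup_vsupp_comp_eq_top_iff, hv, true_and,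
    ← disjoint_iff]
  constructor
  · rintro ⟨f, hf⟩
    choose H hH hle using fun i ↦ exists_isCoatom_le_ker (f i)
    exact ⟨H, hH, hf.mono_right (iInf_mono hle)⟩
  · rintro ⟨H, hH, hdisj⟩
    choose f hf using fun i ↦ exists_eq_ker_of_isCoatom (hH i)
    exact ⟨f, by simpa only [hf] using hdisj⟩

theorem crit_eq_min_hyperplanes_general (hn : 0 < n)
    (hv : ⨆ x : evaluationCode K v, vsupp F (x : Fin n → K) = ⊤) :
    sInf {t : ℕ | 0 < t ∧ ∃ x : Fin t → evaluationCode K v,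
        ⨆ i, vsupp F (x i : Fin n → K) = ⊤} =
      sInf {r : ℕ | ∃ H : Fin r → Submodule K V, (∀ i, IsCoatom (H i)) ∧
        Submodule.span F (Set.range v) ⊓ ⨅ i, (H i).restrictScalars F = ⊥} := by
  have : NeZero n := ⟨hn.ne'⟩
  have hv_indep := linearIndependent_of_iSup_vsupp_evaluationCode_eq_top hv
  have : Nontrivial V := nontrivial_of_ne _ _ (hv_indep.ne_zero 0)
  congr 1 with t
  simp only [Set.mem_ofPred_eq, ← exists_iSup_vsupp_evaluationCode_eq_top_iff hv_indep,
    and_iff_right_iff_imp]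
  rintro ⟨x, hx⟩
  refine Nat.pos_of_ne_zero ?_
  rintro rfl
  exact bot_ne_top ((iSup_of_empty _).symm.trans hx)

end EvaluationCode

/-- geometric description of the critical exponent of the `q`-matroid of a
non-degenerate `F_{q^m}`-`[n,k]` rank-metric code `C` with generator matrix `G`: it equals
the least number `r` of `F_{q^m}`-hyperplanes of `F_{q^m}^k` whose intersection meets the
associated `q`-system `U` (the `F_q`-span of the columns of `G`) trivially. -/
theorem crit_eq_min_hyperplanes
    {F K : Type*} [Field F] [Fintype F] [Field K] [Fintype K] [Algebra F K]
    {n k : ℕ} (hn : 0 < n) (hk : 0 < k)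
    (C : Submodule K (Fin n → K)) (hC : Module.finrank K C = k)
    (hnondeg : (⨆ x : C, vsupp F (x : Fin n → K)) = ⊤)
    (G : Matrix (Fin k) (Fin n) K)
    (hGspan : Submodule.span K (Set.range fun i : Fin k => G i) = C)
    (hGli : LinearIndependent K (fun i : Fin k => G i))
    (U : Submodule F (Fin k → K))
    (hU : U = Submodule.span F (Set.range fun j : Fin n => fun i : Fin k => G i j)) :
    sInf {t : ℕ | 0 < t ∧
        ∃ x : Fin t → C, (⨆ i, vsupp F ((x i : Fin n → K))) = ⊤}
      = sInf {r : ℕ | ∃ H : Fin r → Submodule K (Fin k → K),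
          (∀ i, Module.finrank K (H i) = k - 1) ∧
          U ⊓ (⨅ i, (H i).restrictScalars F) = ⊥} := by
  subst hU hGspan
  rw [span_range_row_eq_evaluationCode] at hnondeg ⊢
  simpa only [isCoatom_iff_finrank_add_one, Module.finrank_fin_fun,
    ← eq_tsub_iff_add_eq_of_le (Nat.one_le_of_lt hk)] using
    crit_eq_min_hyperplanes_general hn hnondeg
end

section
/- Let C be a non-degenerate F_{q^m}-[n, k] rank-metric code and let M[C] be the q-matroid induced by C. Then crit(M[C]) = ⌈n/m⌉, where crit(M[C]) is the least positive integer t such that there exist codewords x_1, …, x_t ∈ C with supp(x_1) + ⋯ + supp(x_t) = F_q^n. -/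
/-!
Pairing `e ∈ F^n` with `x ∈ K^n` by `∑ i, e i • x i ∈ K`, the supports of a family of vectors span
`F^n` iff no nonzero `e` pairs to zero with all of them. Thus `t` codewords with full joint support
embed `F^n` into `K^t`, which gives `n ≤ t m`. Conversely, on a subspace `U` of `F^n` of dimension
at most `m`, each nonzero `e ∈ U` vanishes on a proper `K`-subspace of the code; there are fewer
than `|K|` of these, so they do not cover the code, and some codeword pairs injectively with `U`.
Each codeword chosen this way cuts the part of `F^n` still to be separated by `m` dimensions.
-/

theorem exists_submodule_finrank_eq {R M : Type*} [Ring R] [StrongRankCondition R]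
    [AddCommGroup M] [Module R M] {d : ℕ} (hd : d ≤ Module.finrank R M) :
    ∃ U : Submodule R M, Module.finrank R U = d := by
  have := nontrivial_of_invariantBasisNumber R
  obtain ⟨v, hv⟩ := exists_linearIndependent_of_le_finrank hd
  exact ⟨Submodule.span R (Set.range v), by simpa using finrank_span_eq_card hv⟩

theorem finrank_le_card_mul_finrank_of_iInf_ker_eq_bot {R M N ι : Type*} [Ring R]
    [StrongRankCondition R] [AddCommGroup M] [Module R M] [AddCommGroup N] [Module R N]
    [Module.Free R N] [Module.Finite R N] [Fintype ι] {f : ι → M →ₗ[R] N}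
    (hf : ⨅ i, LinearMap.ker (f i) = ⊥) :
    Module.finrank R M ≤ Fintype.card ι * Module.finrank R N := by
  have pi_injective : Function.Injective (LinearMap.pi f) := by
    rw [← LinearMap.ker_eq_bot, LinearMap.ker_pi, hf]
  simpa [Module.finrank_pi_fintype] using LinearMap.finrank_le_finrank_of_injective pi_injective

section Pairing

variable {F K V W : Type*} [Field F] [Field K] [Algebra F K]
  [AddCommGroup V] [Module F V] [AddCommGroup W] [Module K W]

theorem iInf_ker_domRestrict₂_eq_bot {B : W →ₗ[K] V →ₗ[F] K}
    (hB : ⨅ w, LinearMap.ker (B w) = ⊥) (U : Submodule F V) :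
    ⨅ w, LinearMap.ker (B.domRestrict₂ U w) = ⊥ := by
  rw [Submodule.eq_bot_iff] at hB ⊢
  intro u hu
  simp only [Submodule.mem_iInf, LinearMap.mem_ker, LinearMap.domRestrict₂_apply] at hB hu
  exact Subtype.ext (hB u hu)

variable [Finite K] [FiniteDimensional F V]

theorem exists_ker_eq_bot_of_finrank_le {B : W →ₗ[K] V →ₗ[F] K}
    (hB : ⨅ w, LinearMap.ker (B w) = ⊥) (hV : Module.finrank F V ≤ Module.finrank F K) :
    ∃ w, LinearMap.ker (B w) = ⊥ := by
  have : Finite F := Finite.of_injective (algebraMap F K) (algebraMap F K).injective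
  have : Finite V := Module.finite_of_finite F
  have := Fintype.ofFinite {v : V // v ≠ 0}
  have ker_flip_ne_top (v : {v : V // v ≠ 0}) : LinearMap.ker (B.flip v) ≠ ⊤ := by
    intro h
    have mem_iInf_ker : (v : V) ∈ ⨅ w, LinearMap.ker (B w) :=
      (Submodule.mem_iInf _).mpr fun w => LinearMap.congr_fun (LinearMap.ker_eq_top.mp h) w
    exact v.2 (by rwa [hB, Submodule.mem_bot] at mem_iInf_ker)
  have card_ne_zero_lt : Nat.card {v : V // v ≠ 0} < Nat.card K :=
    calc Nat.card {v : V // v ≠ 0} < Nat.card V := Finite.card_subtype_lt (x := 0) (by simp)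
      _ = Nat.card F ^ Module.finrank F V := Module.natCard_eq_pow_finrank
      _ ≤ Nat.card F ^ Module.finrank F K := Nat.pow_le_pow_right Nat.card_pos hV
      _ = Nat.card K := Module.natCard_eq_pow_finrank.symm
  have iUnion_ssubset := Submodule.iUnion_ssubset_of_forall_ne_top_of_card_lt Finset.univ
    (fun v : {v : V // v ≠ 0} => LinearMap.ker (B.flip v)) ker_flip_ne_top
    (by simpa [ENat.card_eq_coe_natCard] using card_ne_zero_lt)
  obtain ⟨w, -, hw⟩ := Set.exists_of_ssubset iUnion_ssubset
  refine ⟨w, (Submodule.eq_bot_iff _).mpr fun v hv => ?_⟩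
  by_contra v_ne_zero
  exact hw (Set.mem_iUnion₂.mpr ⟨⟨v, v_ne_zero⟩, Finset.mem_univ _, hv⟩)

theorem exists_finrank_ker_le_sub {B : W →ₗ[K] V →ₗ[F] K} (hB : ⨅ w, LinearMap.ker (B w) = ⊥) :
    ∃ w, Module.finrank F (LinearMap.ker (B w)) ≤ Module.finrank F V - Module.finrank F K := by
  obtain ⟨U, finrank_U⟩ := exists_submodule_finrank_eq
    (min_le_left (Module.finrank F V) (Module.finrank F K))
  obtain ⟨w, hw⟩ := exists_ker_eq_bot_of_finrank_le (iInf_ker_domRestrict₂_eq_bot hB U)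
    (finrank_U.trans_le (min_le_right _ _))
  have disjoint_ker : Disjoint (LinearMap.ker (B w)) U :=
    (LinearMap.disjoint_ker_iff_injOn.mpr
      (Set.injOn_iff_injective.mpr (LinearMap.ker_eq_bot.mp hw))).symm
  have := Submodule.finrank_add_finrank_le_of_disjoint disjoint_ker
  exact ⟨w, by omega⟩

theorem exists_iInf_ker_eq_bot_of_finrank_le_mul {t : ℕ} {B : W →ₗ[K] V →ₗ[F] K}
    (hB : ⨅ w, LinearMap.ker (B w) = ⊥) (hV : Module.finrank F V ≤ t * Module.finrank F K) :
    ∃ w : Fin t → W, ⨅ i, LinearMap.ker (B (w i)) = ⊥ := by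
  induction t generalizing V with
  | zero =>
    have : Subsingleton V := Module.finrank_zero_iff.mp (by simpa using hV)
    exact ⟨0, Subsingleton.elim _ _⟩
  | succ t ih =>
    obtain ⟨w₀, hw₀⟩ := exists_finrank_ker_le_sub hB
    obtain ⟨w, hw⟩ := ih (iInf_ker_domRestrict₂_eq_bot hB (LinearMap.ker (B w₀)))
      (by rw [add_one_mul] at hV; omega)
    refine ⟨Fin.cons w₀ w, ?_⟩
    rw [Submodule.eq_bot_iff] at hw ⊢
    intro v hv
    simp only [Submodule.mem_iInf, Fin.forall_fin_succ, Fin.cons_zero, Fin.cons_succ] at hv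
    exact congrArg Subtype.val (hw ⟨v, hv.1⟩ (by simpa [LinearMap.domRestrict₂_apply] using hv.2))

theorem exists_iInf_ker_eq_bot_iff {t : ℕ} {B : W →ₗ[K] V →ₗ[F] K}
    (hB : ⨅ w, LinearMap.ker (B w) = ⊥) :
    (∃ w : Fin t → W, ⨅ i, LinearMap.ker (B (w i)) = ⊥) ↔
      Module.finrank F V ≤ t * Module.finrank F K := by
  refine ⟨fun ⟨w, hw⟩ => ?_, exists_iInf_ker_eq_bot_of_finrank_le_mul hB⟩
  simpa using finrank_le_card_mul_finrank_of_iInf_ker_eq_bot hw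

end Pairing

section Support

variable {F K : Type*} [Field F] [Field K] [Algebra F K] {n : ℕ}

theorem comap_dotProductEquiv_dualAnnihilator_vsupp (x : Fin n → K) :
    (vsupp F x).dualAnnihilator.comap (dotProductEquiv F (Fin n)).toLinearMap =
      LinearMap.ker (Fintype.linearCombination F x) := by
  ext e
  have dotProduct_comp (φ : Module.Dual F K) :
      e ⬝ᵥ (fun i => φ (x i)) = φ (Fintype.linearCombination F x e) := by
    simp [dotProduct, Fintype.linearCombination_apply]
  rw [LinearMap.mem_ker, ← Module.forall_dual_apply_eq_zero_iff F]
  simp [Submodule.mem_dualAnnihilator, vsupp, dotProduct_comp]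

theorem iSup_vsupp_eq_top_iff {ι : Type*} (x : ι → Fin n → K) :
    ⨆ i, vsupp F (x i) = ⊤ ↔ ⨅ i, LinearMap.ker (Fintype.linearCombination F (x i)) = ⊥ := by
  rw [← Submodule.dualAnnihilator_eq_bot_iff, Submodule.dualAnnihilator_iSup_eq]
  simp_rw [← comap_dotProductEquiv_dualAnnihilator_vsupp]
  rw [← Submodule.comap_iInf, Submodule.comap_equiv_eq_map_symm, Submodule.map_eq_bot_iff]

theorem exists_iSup_vsupp_eq_top_iff [Finite K] {C : Submodule K (Fin n → K)}
    (hC : ⨆ x : C, vsupp F (x : Fin n → K) = ⊤) {t : ℕ} :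
    (∃ x : Fin t → C, ⨆ i, vsupp F (x i : Fin n → K) = ⊤) ↔ n ≤ t * Module.finrank F K := by
  simp only [iSup_vsupp_eq_top_iff] at hC ⊢
  simpa using exists_iInf_ker_eq_bot_iff (t := t)
    (B := (Fintype.bilinearCombination F K).domRestrict C) hC

end Support

/-- the `q`-matroid of a non-degenerate `F_{q^m}`-`[n,k]` rank-metric code has
critical exponent `⌈n/m⌉` (here `m = [K : F]` and `⌈n/m⌉ = (n + m - 1)/m`). -/
theorem crit_eq_ceil_of_vector_code
    {F K : Type*} [Field F] [Fintype F] [Field K] [Fintype K] [Algebra F K]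
    {n m k : ℕ} (hn : 0 < n) (hm : 0 < m) (hk : 0 < k)
    (hmK : Module.finrank F K = m)
    (C : Submodule K (Fin n → K)) (hC : Module.finrank K C = k)
    (hnondeg : (⨆ x : C, vsupp F (x : Fin n → K)) = ⊤) :
    sInf {t : ℕ | 0 < t ∧
        ∃ x : Fin t → C, (⨆ i, vsupp F ((x i : Fin n → K))) = ⊤}
      = (n + m - 1) / m := by
  simp only [exists_iSup_vsupp_eq_top_iff hnondeg, hmK, mul_comm _ m]
  rw [← Nat.ceilDiv_eq_add_pred_div]
  refine IsLeast.csInf_eq ⟨⟨?_, le_smul_ceilDiv hm⟩, fun t ht => ?_⟩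
  · exact Nat.div_pos (by omega) hm
  · exact (ceilDiv_le_iff_le_mul hm).mpr ht.2
end

section
/- Let C be an F_q-[n×m, k, d] MRD code, i.e., a k-dimensional F_q-subspace of F_q^{n×m} with minimum rank distance d = min{rank(X) : X ∈ C, X ≠ 0} satisfying k = max(n,m)·(min(n,m) − d + 1). Suppose one of the following holds: (1) n ≤ m; (2) m < n ≤ 2m − d; (3) k = n = m + 1. Then C is non-degenerate and the critical exponent of M[C] equals ⌈n/m⌉; that is, the least dimension of an F_q-subspace D ≤ C with supp(D) = F_q^n is ⌈n/m⌉. -/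
open Matrix

variable {F : Type*} [Field F] {n m : ℕ}

/-- The support of a subspace of matrices: the sum of the column spaces of its elements. -/
def suppCode (D : Submodule F (Matrix (Fin n) (Fin m) F)) : Submodule F (Fin n → F) :=
  ⨆ X : D, colsp (X : Matrix (Fin n) (Fin m) F)

/-- The minimum rank distance of a (nonzero) matrix code: the least rank
(= dimension of the column space) of a nonzero codeword. -/
noncomputable def minRankDist (C : Submodule F (Matrix (Fin n) (Fin m) F)) : ℕ :=
  sInf {r | ∃ X ∈ C, X ≠ 0 ∧ Module.finrank F (colsp X) = r}

/-- The critical exponent of a non-degenerate rank-metric code `C`: the least dimension of a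
subspace `D ≤ C` with `supp(D) = F_q^n`. -/
noncomputable def critExp (C : Submodule F (Matrix (Fin n) (Fin m) F)) : ℕ :=
  sInf {δ | ∃ D : Submodule F (Matrix (Fin n) (Fin m) F),
    D ≤ C ∧ Module.finrank F D = δ ∧ suppCode D = ⊤}

/-!
A family of codewords has full support exactly when no nonzero row vector `v` satisfies `v X = 0`
for all its members `X`. Over a finite field, one codeword that is injective on a given subspace `U`
exists as soon as, for every `u ≠ 0`, the codewords killing `u` have codimension at least `dim U`
in `C`: a union bound over the nonzero vectors of `U`. These codewords form a code of maps on the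
quotient by `u` with the same minimum distance, so the Singleton bound controls their dimension.

For an MRD code this yields a codeword of full rank, which settles `n ≤ m`. For `m < n`, its left
kernel has dimension `n - m`, and the second form of the Singleton bound gives codimension
`m + 1 - d` for the shortened transposed code. Hence a second codeword injective on that kernel
exists whenever `n - m ≤ m + 1 - d`, a condition satisfied in all the cases of the theorem.
Conversely a `δ`-dimensional space of `n × m` matrices has support of dimension at most `δ m`.
-/

open Module

section Subspaces

variable {M : Type*} [AddCommGroup M] [Module F M]

theorem exists_submodule_finrank_eq_s19 {j : ℕ} (hj : j ≤ finrank F M) :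
    ∃ W : Submodule F M, finrank F W = j := by
  obtain ⟨v, hv⟩ := exists_linearIndependent_of_le_finrank hj
  exact ⟨Submodule.span F (Set.range v), by rw [finrank_span_eq_card hv, Fintype.card_fin]⟩

theorem finrank_quotient_span_singleton_add_one [FiniteDimensional F M] {u : M} (hu : u ≠ 0) :
    finrank F (M ⧸ Submodule.span F {u}) + 1 = finrank F M := by
  rw [← Submodule.finrank_quotient_add_finrank (Submodule.span F {u}), finrank_span_singleton hu]

theorem finrank_le_of_disjoint_ker {Z : Type*} [AddCommGroup Z] [Module F Z]
    [FiniteDimensional F Z] {S : Submodule F M} {T : M →ₗ[F] Z}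
    (hST : Disjoint S (LinearMap.ker T)) : finrank F S ≤ finrank F Z :=
  LinearMap.finrank_le_finrank_of_injective (LinearMap.injective_domRestrict_iff.2 hST)

theorem finrank_range_pos [FiniteDimensional F M] {V : Type*} [AddCommGroup V] [Module F V]
    {X : M →ₗ[F] V} (hX : X ≠ 0) : 0 < finrank F (LinearMap.range X) :=
  Submodule.one_le_finrank_iff.2 (mt LinearMap.range_eq_bot.1 hX)

theorem exists_mem_forall_notMem_of_natCard_lt [Finite F] [FiniteDimensional F M]
    {ι : Type*} [Finite ι] (C : Submodule F M) (K : ι → Submodule F M) (e : ℕ)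
    (hK : ∀ i, finrank F ↥(C ⊓ K i) + e ≤ finrank F C) (hι : Nat.card ι < Nat.card F ^ e) :
    ∃ x ∈ C, ∀ i, x ∉ K i := by
  by_contra! hcover
  have : Fintype ι := Fintype.ofFinite ι
  have : Finite M := Module.finite_of_finite F
  have card_eq (S : Submodule F M) : (S : Set M).ncard = Nat.card F ^ finrank F S := by
    rw [← Module.natCard_eq_pow_finrank (K := F) (V := S)]; rfl
  have hsub : (C : Set M) ⊆ ⋃ i, ((C ⊓ K i : Submodule F M) : Set M) := fun x hx =>
    let ⟨i, hi⟩ := hcover x hx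
    Set.mem_iUnion.2 ⟨i, hx, hi⟩
  have hunion : Nat.card F ^ finrank F C ≤ ∑ i, Nat.card F ^ finrank F ↥(C ⊓ K i) := by
    simp only [← card_eq]
    exact (Set.ncard_le_ncard hsub).trans (Set.ncard_iUnion_le_of_fintype _)
  have : Nat.card F ^ finrank F C * Nat.card F ^ e < Nat.card F ^ finrank F C * Nat.card F ^ e :=
    calc Nat.card F ^ finrank F C * Nat.card F ^ e
        ≤ ∑ i, Nat.card F ^ (finrank F ↥(C ⊓ K i) + e) := by
          simpa only [Finset.sum_mul, pow_add] using Nat.mul_le_mul_right _ hunion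
      _ ≤ ∑ _i : ι, Nat.card F ^ finrank F C :=
          Finset.sum_le_sum fun i _ => Nat.pow_le_pow_right Nat.card_pos (hK i)
      _ = Nat.card F ^ finrank F C * Nat.card ι := by
          simp [mul_comm]
      _ < Nat.card F ^ finrank F C * Nat.card F ^ e :=
          Nat.mul_lt_mul_of_pos_left hι (pow_pos Nat.card_pos _)
  exact this.false

end Subspaces

section LinearMapCode

variable {E V : Type*} [AddCommGroup E] [Module F E] [AddCommGroup V] [Module F V]

/-- The linear code `C` of maps `E → V` has minimum rank distance at least `d`. The zero code
satisfies this for every `d`. -/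
def HasMinRank (C : Submodule F (E →ₗ[F] V)) (d : ℕ) : Prop :=
  ∀ X ∈ C, X ≠ 0 → d ≤ finrank F (LinearMap.range X)

/-- The code `C` shortened at `u`: the codewords vanishing at `u`, regarded as maps on the
quotient of `E` by the line through `u`. -/
def shortening (C : Submodule F (E →ₗ[F] V)) (u : E) :
    Submodule F ((E ⧸ Submodule.span F {u}) →ₗ[F] V) :=
  C.comap (LinearMap.lcomp F V (Submodule.span F {u}).mkQ)

theorem HasMinRank.hasMinRank_shortening {C : Submodule F (E →ₗ[F] V)} {d : ℕ} (hC : HasMinRank C d)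
    (u : E) : HasMinRank (shortening C u) d := by
  intro X hX hX0
  have hsurj := Submodule.mkQ_surjective (Submodule.span F {u})
  have hinj := LinearMap.lcomp_injective_of_surjective (S := F) (N := V) _ hsurj
  have h := hC _ hX ((map_ne_zero_iff _ hinj).2 hX0)
  rwa [LinearMap.lcomp_apply', LinearMap.range_comp_of_range_eq_top _
    (LinearMap.range_eq_top.2 hsurj)] at h

theorem finrank_inf_ker_applyₗ_eq_finrank_shortening (C : Submodule F (E →ₗ[F] V)) (u : E) :
    finrank F ↥(C ⊓ LinearMap.ker (LinearMap.applyₗ u)) = finrank F (shortening C u) := by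
  set L := Submodule.span F {u}
  have hker : LinearMap.ker (LinearMap.applyₗ u) = LinearMap.range (LinearMap.lcomp F V L.mkQ) := by
    ext X
    constructor
    · intro hX
      have hL : L ≤ LinearMap.ker X := (Submodule.span_singleton_le_iff_mem _ _).2 hX
      exact ⟨L.liftQ X hL, L.liftQ_mkQ X hL⟩
    · rintro ⟨Y, rfl⟩
      have hu : L.mkQ u = 0 :=
        (Submodule.Quotient.mk_eq_zero L).2 (Submodule.mem_span_singleton_self u)
      rw [LinearMap.mem_ker, LinearMap.applyₗ_apply_apply, LinearMap.lcomp_apply, hu, map_zero]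
  have hinj := LinearMap.lcomp_injective_of_surjective (S := F) (N := V) _ L.mkQ_surjective
  rw [hker, inf_comm, ← Submodule.map_comap_eq]
  exact (Submodule.equivMapOfInjective _ hinj _).finrank_eq.symm

variable [FiniteDimensional F E] [FiniteDimensional F V] {C : Submodule F (E →ₗ[F] V)} {d : ℕ}

/-- A codeword is determined by its restriction to a subspace of codimension `d - 1`. -/
theorem HasMinRank.finrank_le_finrank_codomain_mul (hC : HasMinRank C d) :
    finrank F C ≤ finrank F V * (finrank F E + 1 - d) := by
  obtain ⟨W, hW⟩ := exists_submodule_finrank_eq_s19 (F := F) (M := E) (Nat.sub_le _ (d - 1))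
  have hdisj : Disjoint C (LinearMap.ker (LinearMap.lcomp F V W.subtype)) := by
    refine Submodule.disjoint_def.2 fun X hXC hXW => ?_
    by_contra hX0
    have hker : W ≤ LinearMap.ker X := fun w hw =>
      LinearMap.congr_fun (LinearMap.mem_ker.1 hXW) ⟨w, hw⟩
    have := Submodule.finrank_mono hker
    have := X.finrank_range_add_finrank_ker
    have := finrank_range_pos hX0
    have := hC X hXC hX0
    omega
  calc finrank F C ≤ finrank F (W →ₗ[F] V) := finrank_le_of_disjoint_ker hdisj
    _ = finrank F V * finrank F W := by rw [finrank_linearMap, mul_comm]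
    _ ≤ finrank F V * (finrank F E + 1 - d) := Nat.mul_le_mul_left _ (by omega)

/-- A codeword is determined modulo any subspace of dimension `d - 1` of the codomain. -/
theorem HasMinRank.finrank_le_finrank_domain_mul (hC : HasMinRank C d) :
    finrank F C ≤ finrank F E * (finrank F V + 1 - d) := by
  obtain ⟨P, hP⟩ := exists_submodule_finrank_eq_s19 (F := F) (M := V) (min_le_right (d - 1) _)
  have hdisj : Disjoint C (LinearMap.ker (LinearMap.compRight F P.mkQ)) := by
    refine Submodule.disjoint_def.2 fun X hXC hXP => ?_
    by_contra hX0
    have hrange : LinearMap.range X ≤ P := by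
      rintro _ ⟨v, rfl⟩
      exact (Submodule.Quotient.mk_eq_zero P).1 (LinearMap.congr_fun (LinearMap.mem_ker.1 hXP) v)
    have := Submodule.finrank_mono hrange
    have := finrank_range_pos hX0
    have := hC X hXC hX0
    omega
  calc finrank F C ≤ finrank F (E →ₗ[F] V ⧸ P) := finrank_le_of_disjoint_ker hdisj
    _ = finrank F E * finrank F (V ⧸ P) := finrank_linearMap ..
    _ ≤ finrank F E * (finrank F V + 1 - d) :=
      Nat.mul_le_mul_left _ (by have := P.finrank_quotient_add_finrank; omega)

variable [Finite F]

theorem exists_mem_disjoint_ker_of_finrank_shortening_add_le (U : Submodule F E)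
    (hU : ∀ u ≠ 0, finrank F (shortening C u) + finrank F U ≤ finrank F C) :
    ∃ X ∈ C, Disjoint U (LinearMap.ker X) := by
  have : Finite U := Module.finite_of_finite F
  obtain ⟨X, hXC, hX⟩ := exists_mem_forall_notMem_of_natCard_lt (ι := {u : U // u ≠ 0}) C
    (fun u => LinearMap.ker (LinearMap.applyₗ (u : E))) (finrank F U)
    (fun u => by
      rw [finrank_inf_ker_applyₗ_eq_finrank_shortening]
      exact hU u (by simpa using u.2))
    (by
      rw [← Module.natCard_eq_pow_finrank]
      exact Finite.card_subtype_lt (x := 0) (by simp))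
  refine ⟨X, hXC, Submodule.disjoint_def.2 fun u huU huX => ?_⟩
  by_contra hu
  exact hX ⟨⟨u, huU⟩, by simpa using hu⟩ huX

theorem HasMinRank.exists_mem_ker_eq_bot (hC : HasMinRank C d) (hd : d ≤ finrank F E)
    (hEV : finrank F E ≤ finrank F V) (hk : finrank F V * (finrank F E + 1 - d) ≤ finrank F C) :
    ∃ X ∈ C, LinearMap.ker X = ⊥ := by
  have hshort : ∀ u ≠ 0,
      finrank F (shortening C u) + finrank F (⊤ : Submodule F E) ≤ finrank F C := by
    intro u hu
    have hquot := finrank_quotient_span_singleton_add_one (F := F) hu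
    calc finrank F (shortening C u) + finrank F (⊤ : Submodule F E)
        ≤ finrank F V * (finrank F (E ⧸ Submodule.span F {u}) + 1 - d) + finrank F V := by
          rw [finrank_top]
          exact Nat.add_le_add (hC.hasMinRank_shortening u).finrank_le_finrank_codomain_mul hEV
      _ = finrank F V * (finrank F E + 1 - d) := by
          rw [hquot, Nat.sub_add_comm hd, Nat.mul_succ]
      _ ≤ finrank F C := hk
  obtain ⟨X, hXC, hX⟩ := exists_mem_disjoint_ker_of_finrank_shortening_add_le ⊤ hshort
  exact ⟨X, hXC, top_disjoint.1 hX⟩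

theorem HasMinRank.exists_mem_disjoint_ker (hC : HasMinRank C d)
    (hk : finrank F E * (finrank F V + 1 - d) ≤ finrank F C) (U : Submodule F E)
    (hU : finrank F U ≤ finrank F V + 1 - d) :
    ∃ X ∈ C, Disjoint U (LinearMap.ker X) := by
  refine exists_mem_disjoint_ker_of_finrank_shortening_add_le U fun u hu => ?_
  have hquot := finrank_quotient_span_singleton_add_one (F := F) hu
  calc finrank F (shortening C u) + finrank F U
      ≤ finrank F (E ⧸ Submodule.span F {u}) * (finrank F V + 1 - d) + (finrank F V + 1 - d) :=
        Nat.add_le_add (hC.hasMinRank_shortening u).finrank_le_finrank_domain_mul hU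
    _ = finrank F E * (finrank F V + 1 - d) := by rw [← hquot, Nat.succ_mul]
    _ ≤ finrank F C := hk

end LinearMapCode

section MatrixCode

variable {C D : Submodule F (Matrix (Fin n) (Fin m) F)}

theorem suppCode_eq_top_of_forall_vecMul_eq_zero
    (hD : ∀ v, (∀ X ∈ D, v ᵥ* X = 0) → v = 0) : suppCode D = ⊤ := by
  by_contra hne
  obtain ⟨φ, hφ, hle⟩ := Submodule.exists_le_ker_of_lt_top _ (lt_top_iff_ne_top.2 hne)
  obtain ⟨v, rfl⟩ := (dotProductEquiv F (Fin n)).surjective φ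
  refine hφ ((map_eq_zero_iff _ (dotProductEquiv F (Fin n)).injective).2 (hD v fun X hX => ?_))
  refine dotProduct_eq_zero _ fun w => ?_
  have hXw : X *ᵥ w ∈ suppCode D := le_iSup (fun Y : D => colsp Y.1) ⟨X, hX⟩ ⟨w, rfl⟩
  rw [← dotProduct_mulVec]
  exact hle hXw

theorem finrank_suppCode_le (D : Submodule F (Matrix (Fin n) (Fin m) F)) :
    finrank F (suppCode D) ≤ m * finrank F D := by
  let evalMap : TensorProduct F D (Fin m → F) →ₗ[F] (Fin n → F) :=
    TensorProduct.lift (mulVecBilin F F ∘ₗ D.subtype)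
  have hle : suppCode D ≤ LinearMap.range evalMap := by
    refine iSup_le fun X => ?_
    rintro _ ⟨v, rfl⟩
    exact ⟨X ⊗ₜ[F] v, TensorProduct.lift.tmul ..⟩
  calc finrank F (suppCode D) ≤ finrank F (LinearMap.range evalMap) := Submodule.finrank_mono hle
    _ ≤ finrank F (TensorProduct F D (Fin m → F)) := evalMap.finrank_range_le
    _ = m * finrank F D := by rw [finrank_tensorProduct, finrank_fin_fun, mul_comm]

theorem le_mul_critExp (hC : suppCode C = ⊤) : n ≤ m * critExp C := by
  obtain ⟨D, -, hDim, hD⟩ : critExp C ∈ {δ | ∃ D : Submodule F (Matrix (Fin n) (Fin m) F),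
      D ≤ C ∧ finrank F D = δ ∧ suppCode D = ⊤} := Nat.sInf_mem ⟨_, C, le_rfl, rfl, hC⟩
  have hle := finrank_suppCode_le D
  rwa [hD, finrank_top, finrank_fin_fun, hDim] at hle

theorem critExp_le_card (s : Finset (Matrix (Fin n) (Fin m) F)) (hsC : ∀ X ∈ s, X ∈ C)
    (hs : ∀ v, (∀ X ∈ s, v ᵥ* X = 0) → v = 0) : critExp C ≤ s.card := by
  have htop : suppCode (Submodule.span F (s : Set (Matrix (Fin n) (Fin m) F))) = ⊤ :=
    suppCode_eq_top_of_forall_vecMul_eq_zero fun v hv =>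
      hs v fun X hX => hv X (Submodule.subset_span hX)
  have hcrit : critExp C ≤ finrank F (Submodule.span F (s : Set (Matrix (Fin n) (Fin m) F))) :=
    Nat.sInf_le ⟨_, Submodule.span_le.2 hsC, rfl, htop⟩
  exact hcrit.trans (finrank_span_finset_le_card s)

theorem minRankDist_le_rank {X : Matrix (Fin n) (Fin m) F} (hX : X ∈ C) (hX0 : X ≠ 0) :
    minRankDist C ≤ X.rank :=
  Nat.sInf_le ⟨X, hX, hX0, rfl⟩

theorem minRankDist_le_min (hC : C ≠ ⊥) : minRankDist C ≤ min n m := by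
  obtain ⟨X, hX, hX0⟩ := Submodule.exists_mem_ne_zero_of_ne_bot hC
  exact (minRankDist_le_rank hX hX0).trans (le_min X.rank_le_height X.rank_le_width)

theorem hasMinRank_map_toLin' (C : Submodule F (Matrix (Fin n) (Fin m) F)) :
    HasMinRank (C.map (toLin' : Matrix (Fin n) (Fin m) F ≃ₗ[F] _).toLinearMap)
      (minRankDist C) := by
  rintro _ ⟨X, hX, rfl⟩ hX0
  exact minRankDist_le_rank hX (by rintro rfl; exact hX0 (map_zero _))

/-- The transposes of the codewords of `C`, as maps `v ↦ v ᵥ* X` on row vectors. -/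
def transposeCode (C : Submodule F (Matrix (Fin n) (Fin m) F)) :
    Submodule F ((Fin n → F) →ₗ[F] (Fin m → F)) :=
  C.map (transposeLinearEquiv (Fin n) (Fin m) F F ≪≫ₗ toLin').toLinearMap

theorem hasMinRank_transposeCode (C : Submodule F (Matrix (Fin n) (Fin m) F)) :
    HasMinRank (transposeCode C) (minRankDist C) := by
  rintro _ ⟨X, hX, rfl⟩ hX0
  have h := minRankDist_le_rank hX (by rintro rfl; exact hX0 (map_zero _))
  rwa [← rank_transpose] at h

theorem finrank_transposeCode (C : Submodule F (Matrix (Fin n) (Fin m) F)) :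
    finrank F (transposeCode C) = finrank F C :=
  LinearEquiv.finrank_map_eq _ _

theorem exists_mem_eq_zero_of_vecMul_eq_zero [Finite F] (hd : minRankDist C ≤ n) (hnm : n ≤ m)
    (hk : m * (n + 1 - minRankDist C) ≤ finrank F C) :
    ∃ X ∈ C, ∀ v, v ᵥ* X = 0 → v = 0 := by
  obtain ⟨_, ⟨X, hX, rfl⟩, hker⟩ := (hasMinRank_transposeCode C).exists_mem_ker_eq_bot
    (by simpa using hd) (by simpa using hnm) (by simpa [finrank_transposeCode] using hk)
  refine ⟨X, hX, fun v hv => LinearMap.ker_eq_bot'.1 hker v ?_⟩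
  simpa [mulVec_transpose] using hv

theorem exists_mem_rank_eq_width [Finite F] (hd : minRankDist C ≤ m) (hmn : m ≤ n)
    (hk : n * (m + 1 - minRankDist C) ≤ finrank F C) :
    ∃ X ∈ C, X.rank = m := by
  obtain ⟨_, ⟨X, hX, rfl⟩, hker⟩ := (hasMinRank_map_toLin' C).exists_mem_ker_eq_bot
    (by simpa using hd) (by simpa using hmn) (by simpa [LinearEquiv.finrank_map_eq] using hk)
  refine ⟨X, hX, ?_⟩
  have hrank := LinearMap.finrank_range_of_inj (LinearMap.ker_eq_bot.1 hker)
  rwa [finrank_fin_fun] at hrank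

/-- A codeword of full rank leaves an `(n - m)`-dimensional left kernel, small enough to be avoided
by the left kernel of a second codeword. -/
theorem exists_pair_mem_eq_zero_of_vecMul_eq_zero [Finite F] (hd : minRankDist C ≤ m) (hmn : m ≤ n)
    (hk : n * (m + 1 - minRankDist C) ≤ finrank F C) (hn : n + minRankDist C ≤ 2 * m + 1) :
    ∃ X ∈ C, ∃ Y ∈ C, ∀ v, v ᵥ* X = 0 → v ᵥ* Y = 0 → v = 0 := by
  obtain ⟨X, hX, hrank⟩ := exists_mem_rank_eq_width hd hmn hk
  have hker : finrank F (LinearMap.ker (toLin' Xᵀ)) + m = n := by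
    have hrank' : finrank F (LinearMap.range (toLin' Xᵀ)) = m := X.rank_transpose.trans hrank
    have := (toLin' Xᵀ).finrank_range_add_finrank_ker
    rw [finrank_fin_fun] at this
    omega
  obtain ⟨_, ⟨Y, hY, rfl⟩, hdisj⟩ := (hasMinRank_transposeCode C).exists_mem_disjoint_ker
    (by simpa [finrank_transposeCode] using hk) (LinearMap.ker (toLin' Xᵀ))
    (by rw [finrank_fin_fun]; omega)
  refine ⟨X, hX, Y, hY, fun v hvX hvY => Submodule.disjoint_def.1 hdisj v ?_ ?_⟩
  · simpa [mulVec_transpose] using hvX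
  · simpa [mulVec_transpose] using hvY

theorem pos_and_pos_of_ne_bot (hC : C ≠ ⊥) : 0 < n ∧ 0 < m := by
  obtain ⟨X, -, hX0⟩ := Submodule.exists_mem_ne_zero_of_ne_bot hC
  obtain ⟨i, j, -⟩ : ∃ i j, X i j ≠ 0 := by
    by_contra! h
    exact hX0 (Matrix.ext h)
  exact ⟨i.pos, j.pos⟩

theorem exists_finset_card_le_eq_zero_of_vecMul_eq_zero [Finite F] (hC : C ≠ ⊥)
    (hk : max n m * (min n m + 1 - minRankDist C) ≤ finrank F C)
    (hn : n + minRankDist C ≤ 2 * m + 1) :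
    ∃ s : Finset (Matrix (Fin n) (Fin m) F), (∀ X ∈ s, X ∈ C) ∧
      (∀ v, (∀ X ∈ s, v ᵥ* X = 0) → v = 0) ∧ s.card ≤ n ⌈/⌉ m := by
  classical
  obtain ⟨n_pos, m_pos⟩ := pos_and_pos_of_ne_bot hC
  have hd := minRankDist_le_min hC
  have lt_ceilDiv (t : ℕ) (ht : m * t < n) : t < n ⌈/⌉ m :=
    lt_of_not_ge fun h => ht.not_ge ((ceilDiv_le_iff_le_mul m_pos).1 h)
  rcases le_or_gt n m with hnm | hmn
  · rw [max_eq_right hnm, min_eq_left hnm] at hk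
    rw [min_eq_left hnm] at hd
    obtain ⟨X, hX, hinj⟩ := exists_mem_eq_zero_of_vecMul_eq_zero hd hnm hk
    exact ⟨{X}, by simpa using hX, by simpa using hinj, lt_ceilDiv 0 (by omega)⟩
  · rw [max_eq_left hmn.le, min_eq_right hmn.le] at hk
    rw [min_eq_right hmn.le] at hd
    obtain ⟨X, hX, Y, hY, hinj⟩ := exists_pair_mem_eq_zero_of_vecMul_eq_zero hd hmn.le hk hn
    exact ⟨{X, Y}, by simpa using ⟨hX, hY⟩, by simpa using hinj,
      Finset.card_le_two.trans (lt_ceilDiv 1 (by omega))⟩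

end MatrixCode

theorem add_le_two_mul_add_one_of_MRD_cases {k d : ℕ} (hd : d ≤ min n m)
    (hk : k = max n m * (min n m - d + 1))
    (hcases : n ≤ m ∨ (m < n ∧ n ≤ 2 * m - d) ∨ (k = n ∧ n = m + 1)) :
    n + d ≤ 2 * m + 1 := by
  rcases hcases with hnm | ⟨hmn, hn⟩ | ⟨rfl, hkm⟩
  · omega
  · omega
  · rw [max_eq_left (by omega), eq_comm, Nat.mul_eq_left (by omega)] at hk
    omega

theorem crit_of_MRD_general [Finite F] (C : Submodule F (Matrix (Fin n) (Fin m) F)) (hC : C ≠ ⊥)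
    (hMRD : finrank F C = max n m * (min n m - minRankDist C + 1))
    (hn : n + minRankDist C ≤ 2 * m + 1) :
    suppCode C = ⊤ ∧ critExp C = (n + m - 1) / m := by
  have hk : max n m * (min n m + 1 - minRankDist C) ≤ finrank F C := by
    rw [hMRD, Nat.sub_add_comm (minRankDist_le_min hC)]
  obtain ⟨s, hsC, hs, hcard⟩ := exists_finset_card_le_eq_zero_of_vecMul_eq_zero hC hk hn
  have hsupp : suppCode C = ⊤ := suppCode_eq_top_of_forall_vecMul_eq_zero fun v hv =>
    hs v fun X hX => hv X (hsC X hX)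
  rw [← Nat.ceilDiv_eq_add_pred_div]
  exact ⟨hsupp, le_antisymm ((critExp_le_card s hsC hs).trans hcard)
    ((ceilDiv_le_iff_le_mul (pos_and_pos_of_ne_bot hC).2).2 (le_mul_critExp hsupp))⟩

/-- let `C` be an `F_q`-`[n×m, k, d]` MRD code
(`k = max(n,m)·(min(n,m) - d + 1)`).  If `n ≤ m`, or `m < n ≤ 2m - d`, or `k = n = m + 1`,
then `C` is non-degenerate and `crit(M[C]) = ⌈n/m⌉` (here `⌈n/m⌉ = (n + m - 1)/m`). -/
theorem crit_of_MRD
    [Fintype F] {k d : ℕ} (hn : 0 < n) (hm : 0 < m) (hd0 : 0 < d)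
    (C : Submodule F (Matrix (Fin n) (Fin m) F)) (hC : C ≠ ⊥)
    (hk : Module.finrank F C = k)
    (hd : d = minRankDist C)
    (hMRD : k = max n m * (min n m - d + 1))
    (hcases : n ≤ m ∨ (m < n ∧ n ≤ 2 * m - d) ∨ (k = n ∧ n = m + 1)) :
    suppCode C = ⊤ ∧ critExp C = (n + m - 1) / m := by
  subst hd hk
  exact crit_of_MRD_general C hC hMRD
    (add_le_two_mul_add_one_of_MRD_cases (minRankDist_le_min hC) hMRD hcases)
end
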